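/- arXiv:2603.25224 — 3 statements merged into one kernel-verified Lean document; each statement's English description precedes it below -/
import Mathlib

section
/- Under the continuity assumption, the optimal (ℓ,𝒵)-fair discretized predictor f*_{(ℓ,𝒵)-fair} is also a minimizer over f ∈ ℱ_K of the Lagrangian-penalized risk ℛ_{λ*}(f) := R(f) + Σ_{s∈𝒮} Σ_{m=1}^M λ*_{s,m}(ℙ_s(f(X,s) ≤ z_m) − ℓ_m), where λ* is the optimal dual parameter from the characterization theorem (a minimizer of the dual objective H). -/
/-! By the bias-variance identity, the penalized risk of a predictor is the risk of the regression
function minus the sum over the groups `s` of the expected score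
`-π_s (y - f*(x,s))² - ⟨λ_s, a(y) - ℓ⟩` of its value `y`, so selecting for each `(x, s)` a value
with the largest score minimizes the penalized risk. Two distinct values have the same score at only
one value of `f*`, and `f*` has no atoms, so the maximizer is almost surely unique; by the envelope
theorem the dual objective is then differentiable in each coordinate at `λ`, and its vanishing
partial derivatives say that the selected predictor is fair. The penalty vanishes on fair
predictors, so the optimal fair predictor has a penalized risk no larger than that of this
minimizer. -/

open MeasureTheory ProbabilityTheory Filter Function

noncomputable section

namespace FairReg

/-- The regular grid `𝒴_K = {y_k = -A + 2A(k-1)/(K-1)}` of `[-A, A]` with `K` points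
(indexed here by `k ∈ {0, …, K-1}`). -/
def grid (A : ℝ) (K : ℕ) : Finset ℝ :=
  (Finset.range K).image (fun k : ℕ => -A + 2 * A * (k : ℝ) / ((K : ℝ) - 1))

/-- Maximum of `g` over a finite set `t` of reals, `max_{y ∈ t} g y`
(realized as the supremum of the image). -/
def gmax (t : Finset ℝ) (g : ℝ → ℝ) : ℝ := sSup (g '' (t : Set ℝ))

/-- Projection (clamp) `Π_{[-A,A]}` onto the interval `[-A, A]`. -/
def clamp (A t : ℝ) : ℝ := max (-A) (min A t)

/-- The indicator vector `a(y) = (1{y ≤ z_1}, …, 1{y ≤ z_M})`. -/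
def aInd {M : ℕ} (z : Fin M → ℝ) (y : ℝ) (m : Fin M) : ℝ := if y ≤ z m then 1 else 0

/-- Conditional probability `ℙ_s(E) = ℙ(E | S = s)`. -/
def condProb {Ω 𝒮 : Type*} [MeasurableSpace Ω] (μ : Measure Ω) (S : Ω → 𝒮) (s : 𝒮)
    (E : Set Ω) : ℝ := (μ[|S ⁻¹' {s}] E).toReal

/-- The (population) squared risk `R(f) = 𝔼[(Y - f(X,S))²]`. -/
def risk {Ω 𝒮 : Type*} [MeasurableSpace Ω] {d : ℕ} (μ : Measure Ω)
    (X : Ω → Fin d → ℝ) (S : Ω → 𝒮) (Y : Ω → ℝ) (f : (Fin d → ℝ) → 𝒮 → ℝ) : ℝ :=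
  ∫ ω, (Y ω - f (X ω) (S ω)) ^ 2 ∂μ

end FairReg

theorem apply_le_apply_of_forall_sum_le_sum {κ N : Type*} {α : κ → Type*} [Fintype κ]
    [AddCommMonoid N] [LinearOrder N] [IsOrderedCancelAddMonoid N] {F : ∀ i, α i → N}
    {a : ∀ i, α i} (h : ∀ b : ∀ i, α i, ∑ i, F i (a i) ≤ ∑ i, F i (b i)) (i : κ) (x : α i) :
    F i (a i) ≤ F i x := by
  classical
  by_contra! hlt
  refine (h (update a i x)).not_gt (Finset.sum_lt_sum (fun j _ => ?_) ⟨i, Finset.mem_univ i, ?_⟩)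
  · rcases eq_or_ne j i with rfl | hj
    · simpa using hlt.le
    · simp [hj]
  · simpa using hlt

section FiniteMaximum

variable {α ι : Type*}

theorem exists_measurable_argmax {β : Type*} [MeasurableSpace α] [MeasurableSpace ι] [Finite ι]
    [Nonempty ι] [LinearOrder β] [TopologicalSpace β] [OrderClosedTopology β]
    [SecondCountableTopology β] [MeasurableSpace β] [OpensMeasurableSpace β] {F : ι → α → β}
    (hF : ∀ i, Measurable (F i)) :
    ∃ σ : α → ι, Measurable σ ∧ ∀ a i, F i a ≤ F (σ a) a := by
  classical
  obtain ⟨e, he⟩ := exists_surjective_nat ι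
  have hex : ∀ a, ∃ n, ∀ i, F i a ≤ F (e n) a := fun a => by
    obtain ⟨i₀, hi₀⟩ := Finite.exists_max (F · a)
    obtain ⟨n, rfl⟩ := he i₀
    exact ⟨n, hi₀⟩
  have hmeas : ∀ n, MeasurableSet {a | ∀ i, F i a ≤ F (e n) a} := fun n => by
    simpa only [Set.ofPred_forall] using
      MeasurableSet.iInter fun i => measurableSet_le (hF i) (hF (e n))
  exact ⟨fun a => e (Nat.find (hex a)), Measurable.find (fun _ => measurable_const) hmeas hex,
    fun a => Nat.find_spec (hex a)⟩

theorem integrable_comp_of_forall_mem {E : Type*} [NormedAddCommGroup E] [MeasurableSpace α]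
    [MeasurableSpace ι] [MeasurableSingletonClass ι] {ν : Measure α} {T : Finset ι} {h : α → ι}
    (hh : Measurable h) (hT : ∀ a, h a ∈ T) {Φ : ι → α → E} (hΦ : ∀ i ∈ T, Integrable (Φ i) ν) :
    Integrable (fun a => Φ (h a) a) ν := by
  classical
  have hsum : (fun a => Φ (h a) a) = fun a => ∑ i ∈ T, (h ⁻¹' {i}).indicator (Φ i) a := by
    funext a
    simp [Set.indicator_apply, hT a]
  rw [hsum]
  exact integrable_finsetSum T fun i hi => (hΦ i hi).indicator (hh (measurableSet_singleton i))

theorem ciSup_eq_of_forall_le {f : ι → ℝ} {i₀ : ι} (h : ∀ i, f i ≤ f i₀) : ⨆ i, f i = f i₀ :=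
  IsGreatest.csSup_eq ⟨⟨i₀, rfl⟩, Set.forall_mem_range.2 h⟩

variable [Finite ι]

theorem lipschitzWith_ciSup [Nonempty ι] [PseudoMetricSpace α] {C : NNReal} {f : ι → α → ℝ}
    (hf : ∀ i, LipschitzWith C (f i)) : LipschitzWith C fun a => ⨆ i, f i a :=
  LipschitzWith.of_le_add_mul C fun a b => ciSup_le fun i =>
    ((hf i).le_add_mul a b).trans <|
      add_le_add_left (le_ciSup (Set.finite_range fun i => f i b).bddAbove i) _

theorem hasDerivAt_ciSup_sub_mul {u φ : ι → ℝ} {i₀ : ι} (h : ∀ i ≠ i₀, u i < u i₀) :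
    HasDerivAt (fun t => ⨆ i, (u i - t * φ i)) (-φ i₀) 0 := by
  have hmax : ∀ᶠ t in nhds (0 : ℝ), ∀ i, u i - t * φ i ≤ u i₀ - t * φ i₀ := by
    refine eventually_all.2 fun i => ?_
    rcases eq_or_ne i i₀ with rfl | hi
    · exact Eventually.of_forall fun _ => le_rfl
    have hlt : u i - 0 * φ i < u i₀ - 0 * φ i₀ := by simpa using h i hi
    have hcont : ∀ j, ContinuousAt (fun t : ℝ => u j - t * φ j) 0 := fun j => by fun_prop
    exact ((hcont i).eventually_lt (hcont i₀) hlt).mono fun _ => le_of_lt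
  have hlin : HasDerivAt (fun t : ℝ => u i₀ - t * φ i₀) (-φ i₀) 0 := by
    simpa using ((hasDerivAt_id (0 : ℝ)).mul_const (φ i₀)).const_sub (u i₀)
  exact hlin.congr_of_eventuallyEq (hmax.mono fun _ => ciSup_eq_of_forall_le)

variable [Nonempty ι] [MeasurableSpace ι] [MeasurableSingletonClass ι] [MeasurableSpace α]
  {ν : Measure α} [IsFiniteMeasure ν] {u : ι → α → ℝ} {φ : ι → ℝ} {σ : α → ι}

theorem hasDerivAt_integral_ciSup_sub_mul (hu : ∀ i, Integrable (u i) ν) (hσ : Measurable σ)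
    (hmax : ∀ᵐ a ∂ν, ∀ i ≠ σ a, u i a < u (σ a) a) :
    HasDerivAt (fun t => ∫ a, ⨆ i, (u i a - t * φ i) ∂ν) (∫ a, -φ (σ a) ∂ν) 0 := by
  cases nonempty_fintype ι
  obtain ⟨C, hC⟩ := (Set.finite_range φ).isBounded.exists_norm_le
  have hlip : ∀ a, LipschitzWith (Real.nnabs C) fun t => ⨆ i, (u i a - t * φ i) := fun a =>
    lipschitzWith_ciSup fun i => LipschitzWith.of_le_add_mul _ fun s t => by
      have : (t - s) * φ i ≤ |s - t| * |C| := by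
        rw [abs_sub_comm]
        refine (le_abs_self _).trans ?_
        rw [abs_mul]
        exact mul_le_mul_of_nonneg_left ((hC _ ⟨i, rfl⟩).trans (le_abs_self C)) (abs_nonneg _)
      rw [Real.coe_nnabs, Real.dist_eq]
      linarith
  have hmeas : ∀ t : ℝ, AEStronglyMeasurable (fun a => ⨆ i, (u i a - t * φ i)) ν := fun t =>
    (AEMeasurable.iSup fun i => (hu i).aemeasurable.sub_const _).aestronglyMeasurable
  have hint : Integrable (fun a => ⨆ i, (u i a - 0 * φ i)) ν := by
    have hsel : Integrable (fun a => u (σ a) a) ν :=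
      integrable_comp_of_forall_mem hσ (fun a => Finset.mem_univ _) fun i _ => hu i
    refine hsel.congr (hmax.mono fun a ha => ?_)
    simp only [zero_mul, sub_zero]
    refine (ciSup_eq_of_forall_le (f := (u · a)) fun i => ?_).symm
    rcases eq_or_ne i (σ a) with rfl | hi
    exacts [le_rfl, (ha i hi).le]
  exact (hasDerivAt_integral_of_dominated_loc_of_lip univ_mem (Eventually.of_forall hmeas)
    hint (((measurable_of_finite φ).comp hσ).neg.aestronglyMeasurable)
    (ae_of_all _ fun a => (hlip a).lipschitzOnWith)
    (integrable_const C) (hmax.mono fun a => hasDerivAt_ciSup_sub_mul)).2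

theorem integral_comp_argmax_eq_zero (hu : ∀ i, Integrable (u i) ν) (hσ : Measurable σ)
    (hmax : ∀ᵐ a ∂ν, ∀ i ≠ σ a, u i a < u (σ a) a)
    (hmin : ∀ t : ℝ, ∫ a, ⨆ i, u i a ∂ν ≤ ∫ a, ⨆ i, (u i a - t * φ i) ∂ν) :
    ∫ a, φ (σ a) ∂ν = 0 := by
  have hloc : IsLocalMin (fun t : ℝ => ∫ a, ⨆ i, (u i a - t * φ i) ∂ν) 0 :=
    Eventually.of_forall fun t => by simpa using hmin t
  simpa [integral_neg] using
    hloc.hasDerivAt_eq_zero (hasDerivAt_integral_ciSup_sub_mul hu hσ hmax)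

end FiniteMaximum

section Measure

theorem nullSingletonClass_map_of_continuous {Ω : Type*} [MeasurableSpace Ω] {ν : Measure Ω}
    [IsProbabilityMeasure ν] {W : Ω → ℝ} (hW : Measurable W)
    (h : Continuous fun t => ν.real {ω | W ω ≤ t}) : NullSingletonClass (ν.map W) where
  measure_singleton c := by
    have := Measure.isProbabilityMeasure_map (μ := ν) hW.aemeasurable
    have hcdf : (cdf (ν.map W) : ℝ → ℝ) = fun t => ν.real {ω | W ω ≤ t} := by
      funext t
      rw [cdf_eq_real, map_measureReal_apply hW measurableSet_Iic]
      rfl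
    rw [← measure_cdf (ν.map W), StieltjesFunction.measure_singleton, hcdf,
      h.continuousAt.continuousWithinAt.leftLim_eq, sub_self, ENNReal.ofReal_zero]

variable {Ω 𝒮 : Type*} {m₀ : MeasurableSpace Ω} {μ : Measure Ω}
  [MeasurableSpace 𝒮] [MeasurableSingletonClass 𝒮] {S : Ω → 𝒮}

theorem ae_eq_comp_cond_fiber {β : Type*} {f : 𝒮 → Ω → β} (hS : Measurable S) (s : 𝒮) :
    (fun ω => f (S ω) ω) =ᵐ[μ[|S ⁻¹' {s}]] f s := by
  filter_upwards [ae_cond_mem (μ := μ) (hS (measurableSet_singleton s))] with ω hω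
  rw [show S ω = s from hω]

variable {E : Type*} [NormedAddCommGroup E] {f : 𝒮 → Ω → E}

theorem memLp_cond_fiber (hS : Measurable S) {p : ENNReal}
    (hf : MemLp (fun ω => f (S ω) ω) p μ) (s : 𝒮) : MemLp (f s) p (μ[|S ⁻¹' {s}]) := by
  rcases eq_or_ne (μ (S ⁻¹' {s})) 0 with h0 | h0
  · simp [cond_eq_zero_of_meas_eq_zero h0]
  · exact (memLp_congr_ae (ae_eq_comp_cond_fiber hS s)).1
      ((hf.restrict _).smul_measure (ENNReal.inv_ne_top.2 h0))

theorem integral_eq_sum_integral_cond_fiber [NormedSpace ℝ E] [Fintype 𝒮] [IsFiniteMeasure μ]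
    (hS : Measurable S) (hf : Integrable (fun ω => f (S ω) ω) μ) :
    ∫ ω, f (S ω) ω ∂μ = ∑ s, μ.real (S ⁻¹' {s}) • ∫ ω, f s ω ∂(μ[|S ⁻¹' {s}]) := by
  have hint : ∀ s, Integrable (fun ω => f (S ω) ω) (μ[|S ⁻¹' {s}]) := fun s =>
    (memLp_one_iff_integrable.1 (memLp_cond_fiber hS (memLp_one_iff_integrable.2 hf) s)).congr
      (ae_eq_comp_cond_fiber hS s).symm
  conv_lhs => rw [← sum_meas_smul_cond_fiber hS μ]
  rw [integral_finsetSum_measure fun s _ => (hint s).smul_measure (measure_ne_top _ _)]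
  simp only [integral_smul_measure, integral_congr_ae (ae_eq_comp_cond_fiber hS _), measureReal_def]

theorem integral_sub_sq_eq_add_of_condExp [IsFiniteMeasure μ]
    {m : MeasurableSpace Ω} (hm : m ≤ m₀) {Y G : Ω → ℝ} (hY : MemLp Y 2 μ) (hG : MemLp G 2 μ)
    (hGm : AEStronglyMeasurable[m] G μ) :
    ∫ ω, (Y ω - G ω) ^ 2 ∂μ
      = ∫ ω, (Y ω - μ[Y | m] ω) ^ 2 ∂μ + ∫ ω, (G ω - μ[Y | m] ω) ^ 2 ∂μ := by
  set F := μ[Y | m]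
  have hF : MemLp F 2 μ := hY.condExp (by norm_num)
  have hFG : AEStronglyMeasurable[m] (F - G) μ :=
    stronglyMeasurable_condExp.aestronglyMeasurable.sub hGm
  have hYint : Integrable Y μ := hY.integrable (by norm_num)
  have hYFG : Integrable (Y * (F - G)) μ := hY.integrable_mul (hF.sub hG)
  have hFFG : Integrable (F * (F - G)) μ := hF.integrable_mul (hF.sub hG)
  have horth : ∫ ω, (Y * (F - G)) ω ∂μ = ∫ ω, (F * (F - G)) ω ∂μ := by
    rw [← integral_condExp hm]
    exact integral_congr_ae (condExp_mul_of_aestronglyMeasurable_right hFG hYFG hYint)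
  have hYF2 : Integrable (fun ω => (Y ω - F ω) ^ 2) μ := (hY.sub hF).integrable_sq
  have hGF2 : Integrable (fun ω => (G ω - F ω) ^ 2) μ := (hG.sub hF).integrable_sq
  have hcross : Integrable (fun ω => (Y * (F - G)) ω - (F * (F - G)) ω) μ := hYFG.sub hFFG
  calc ∫ ω, (Y ω - G ω) ^ 2 ∂μ
      = ∫ ω, ((Y ω - F ω) ^ 2 + (G ω - F ω) ^ 2
          + 2 * ((Y * (F - G)) ω - (F * (F - G)) ω)) ∂μ := by
        congr 1 with ω
        simp only [Pi.mul_apply, Pi.sub_apply]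
        ring
    _ = ∫ ω, (Y ω - F ω) ^ 2 ∂μ + ∫ ω, (G ω - F ω) ^ 2 ∂μ := by
        rw [integral_add (by exact hYF2.add hGF2) (hcross.const_mul 2), integral_add hYF2 hGF2,
          integral_const_mul, integral_sub hYFG hFFG, horth, sub_self, mul_zero, add_zero]

end Measure

namespace FairReg

theorem gmax_eq_ciSup (T : Finset ℝ) (g : ℝ → ℝ) : gmax T g = ⨆ y : T, g y :=
  sSup_image'

theorem aInd_eq_indicator {M : ℕ} (z : Fin M → ℝ) (y : ℝ) (m : Fin M) :
    aInd z y m = (Set.Iic (z m)).indicator 1 y := by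
  simp [aInd, Set.indicator_apply]

section Score

/-- What the dual objective maximizes over the predicted value `y`: minus the squared error at the
regression value `w`, weighted by the group probability `p`, minus the Lagrange term `c y`. -/
def score (p : ℝ) (c : ℝ → ℝ) (y w : ℝ) : ℝ := -p * (y - w) ^ 2 - c y

variable {p : ℝ} {c : ℝ → ℝ}

theorem measurable_score (y : ℝ) : Measurable (score p c y) := by
  unfold score
  fun_prop

-- The quadratic terms in `w` cancel, so the difference of the two scores is affine in `w`.
theorem subsingleton_setOf_score_eq (hp : p ≠ 0) {y y' : ℝ} (hy : y ≠ y') :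
    {w | score p c y w = score p c y' w}.Subsingleton := by
  intro w (hw : score p c y w = score p c y' w) w' (hw' : score p c y w' = score p c y' w')
  unfold score at hw hw'
  refine mul_left_cancel₀ (mul_ne_zero hp (sub_ne_zero.2 hy)) ?_
  linarith

theorem ae_injOn_score {P : Measure ℝ} [NullSingletonClass P] (hp : p ≠ 0) {T : Set ℝ}
    (hT : T.Countable) : ∀ᵐ w ∂P, Set.InjOn (score p c · w) T := by
  refine (ae_ball_iff hT).2 fun y _ => (ae_ball_iff hT).2 fun y' _ => ?_
  rcases eq_or_ne y y' with rfl | hy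
  · exact ae_of_all _ fun _ _ => rfl
  · have hne : ∀ᵐ w ∂P, score p c y w ≠ score p c y' w := by
      rw [ae_iff]
      simpa using (subsingleton_setOf_score_eq hp hy).measure_zero P
    exact hne.mono fun _ h heq => absurd heq h

theorem integrable_score_comp {Ω : Type*} [MeasurableSpace Ω] {ν : Measure Ω} [IsFiniteMeasure ν]
    {W : Ω → ℝ} (hW : MemLp W 2 ν) (y : ℝ) : Integrable (fun ω => score p c y (W ω)) ν :=
  (((memLp_const y).sub hW).integrable_sq.const_mul (-p)).sub (integrable_const (c y))

end Score

section LagrangeTerm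

variable {ι : Type*} [Fintype ι]

/-- The Lagrange term `⟨λ, a(y) - ℓ⟩` of a predicted value `y`, with a general constraint set `B m`
in place of the half-line `{y | y ≤ z m}`. -/
def lagrangeTerm (B : ι → Set ℝ) (ℓ lam : ι → ℝ) (y : ℝ) : ℝ :=
  ∑ m, lam m * ((B m).indicator 1 y - ℓ m)

variable {B : ι → Set ℝ} {ℓ : ι → ℝ}

theorem score_lagrangeTerm_add_single [DecidableEq ι] (p : ℝ) (lam : ι → ℝ) (m : ι) (t y w : ℝ) :
    score p (lagrangeTerm B ℓ (lam + Pi.single m t)) y w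
      = score p (lagrangeTerm B ℓ lam) y w - t * ((B m).indicator 1 y - ℓ m) := by
  simp [score, lagrangeTerm, add_mul, Finset.sum_add_distrib, Pi.single_apply, sub_sub]

variable {Ω : Type*} [MeasurableSpace Ω] {ν : Measure Ω} {T : Finset ℝ} {h : Ω → ℝ}

theorem integral_indicator_one_comp_sub_const [IsProbabilityMeasure ν] (hh : Measurable h)
    (hT : ∀ ω, h ω ∈ T) (D : Set ℝ) (a : ℝ) :
    ∫ ω, (D.indicator 1 (h ω) - a) ∂ν = ν.real {ω | h ω ∈ D} - a := by
  have hD : {ω | h ω ∈ D} = h ⁻¹' (T ∩ D) := by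
    ext ω
    simp [hT ω]
  have hmeas : MeasurableSet {ω | h ω ∈ D} :=
    hD ▸ hh (T.finite_toSet.inter_of_left D).measurableSet
  have hint : Integrable ({ω | h ω ∈ D}.indicator (1 : Ω → ℝ)) ν :=
    (integrable_const 1).indicator hmeas
  calc ∫ ω, (D.indicator 1 (h ω) - a) ∂ν
      = ∫ ω, ({ω | h ω ∈ D}.indicator 1 ω - a) ∂ν := rfl
    _ = ν.real {ω | h ω ∈ D} - a := by
        rw [integral_sub hint (integrable_const a), integral_indicator_one hmeas, integral_const,
          probReal_univ, one_smul]

theorem integral_lagrangeTerm_comp [IsProbabilityMeasure ν] (hh : Measurable h)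
    (hT : ∀ ω, h ω ∈ T) (lam : ι → ℝ) :
    ∫ ω, lagrangeTerm B ℓ lam (h ω) ∂ν = ∑ m, lam m * (ν.real {ω | h ω ∈ B m} - ℓ m) := by
  have hterm : ∀ m, Integrable (fun ω => lam m * ((B m).indicator 1 (h ω) - ℓ m)) ν := fun m =>
    integrable_comp_of_forall_mem hh hT (Φ := fun y _ => lam m * ((B m).indicator 1 y - ℓ m))
      fun _ _ => integrable_const _
  simp only [lagrangeTerm, integral_finsetSum _ fun m _ => hterm m, integral_const_mul,
    integral_indicator_one_comp_sub_const hh hT]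

theorem measureReal_argmax_mem_eq_of_dual_min [IsProbabilityMeasure ν] {p : ℝ} (hp : p ≠ 0)
    {W : Ω → ℝ} (hW : Measurable W) (hW2 : MemLp W 2 ν) [NullSingletonClass (ν.map W)]
    {lam : ι → ℝ}
    (hmin : ∀ lam', ∫ ω, gmax T (score p (lagrangeTerm B ℓ lam) · (W ω)) ∂ν
      ≤ ∫ ω, gmax T (score p (lagrangeTerm B ℓ lam') · (W ω)) ∂ν)
    {σ : ℝ → T} (hσ : Measurable σ)
    (hmax : ∀ w (y : T), score p (lagrangeTerm B ℓ lam) y w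
      ≤ score p (lagrangeTerm B ℓ lam) (σ w) w) (m : ι) :
    ν.real {ω | (σ (W ω) : ℝ) ∈ B m} = ℓ m := by
  have : Nonempty T := ⟨σ 0⟩
  classical
  have hunique : ∀ᵐ ω ∂ν, ∀ y ≠ σ (W ω), score p (lagrangeTerm B ℓ lam) y (W ω)
      < score p (lagrangeTerm B ℓ lam) (σ (W ω)) (W ω) := by
    filter_upwards [ae_of_ae_map hW.aemeasurable (ae_injOn_score hp T.countable_toSet)]
      with ω hinj y hy
    exact (hmax _ y).lt_of_ne fun heq => hy (Subtype.ext (hinj y.2 (σ (W ω)).2 heq))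
  have hshift : ∀ t : ℝ, ∫ ω, ⨆ y : T, score p (lagrangeTerm B ℓ lam) y (W ω) ∂ν
      ≤ ∫ ω, ⨆ y : T, (score p (lagrangeTerm B ℓ lam) y (W ω)
        - t * ((B m).indicator 1 (y : ℝ) - ℓ m)) ∂ν := fun t => by
    have hdual := hmin (lam + Pi.single m t)
    simpa only [gmax_eq_ciSup, score_lagrangeTerm_add_single] using hdual
  have hstat : ∫ ω, ((B m).indicator 1 (σ (W ω) : ℝ) - ℓ m) ∂ν = 0 :=
    integral_comp_argmax_eq_zero (φ := fun y : T => (B m).indicator 1 (y : ℝ) - ℓ m)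
      (fun y => integrable_score_comp hW2 (y : ℝ)) (hσ.comp hW) hunique hshift
  have hσW : Measurable fun ω => (σ (W ω) : ℝ) := measurable_subtype_coe.comp (hσ.comp hW)
  rwa [integral_indicator_one_comp_sub_const hσW fun ω => (σ (W ω)).2, sub_eq_zero] at hstat

end LagrangeTerm

section Predictor

variable {Ω 𝒳 𝒮 ι : Type*} [MeasurableSpace Ω]

/-- The class `ℱ_K` of measurable predictors with values in the finite set `T`, which plays the
role of the grid `𝒴_K`. -/
def predictorClass [MeasurableSpace 𝒳] [MeasurableSpace 𝒮] (T : Finset ℝ) : Set (𝒳 → 𝒮 → ℝ) :=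
  {g | Measurable (uncurry g) ∧ ∀ x s, g x s ∈ T}

/-- The predictor `g` is fair: in every group, its value lies in the constraint set `B m` with
probability `ℓ m`. For `B m = Set.Iic (z m)` this is `(ℓ,𝒵)`-fairness. -/
def IsFair (μ : Measure Ω) (X : Ω → 𝒳) (S : Ω → 𝒮) (B : ι → Set ℝ) (ℓ : ι → ℝ)
    (g : 𝒳 → 𝒮 → ℝ) : Prop :=
  ∀ s m, condProb μ S s {ω | g (X ω) s ∈ B m} = ℓ m

/-- The squared risk `R(g)`, as `FairReg.risk`, for covariates in an arbitrary space. -/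
def squaredRisk (μ : Measure Ω) (X : Ω → 𝒳) (S : Ω → 𝒮) (Y : Ω → ℝ) (g : 𝒳 → 𝒮 → ℝ) : ℝ :=
  ∫ ω, (Y ω - g (X ω) (S ω)) ^ 2 ∂μ

/-- `fstar` is a version of the regression function `f*(x,s) = 𝔼[Y | X = x, S = s]`. -/
def IsRegressionFunction [MeasurableSpace 𝒳] [MeasurableSpace 𝒮] (μ : Measure Ω) (X : Ω → 𝒳)
    (S : Ω → 𝒮) (Y : Ω → ℝ) (fstar : 𝒳 → 𝒮 → ℝ) : Prop :=
  (fun ω => fstar (X ω) (S ω))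
    =ᵐ[μ] μ[Y | MeasurableSpace.comap (fun ω => (X ω, S ω)) inferInstance]

/-- The Lagrangian-penalized risk `ℛ_λ(g)`. -/
def penalizedRisk [Fintype 𝒮] [Fintype ι] (μ : Measure Ω) (X : Ω → 𝒳) (S : Ω → 𝒮) (Y : Ω → ℝ)
    (B : ι → Set ℝ) (ℓ : ι → ℝ) (lam : 𝒮 → ι → ℝ) (g : 𝒳 → 𝒮 → ℝ) : ℝ :=
  squaredRisk μ X S Y g + ∑ s, ∑ m, lam s m * (condProb μ S s {ω | g (X ω) s ∈ B m} - ℓ m)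

/-- The summand of the dual objective `H(λ)` for the group `s`, as a function of the multipliers
`c = λ_s` of this group; `fstar` is the regression function. -/
def groupDual [Fintype ι] (μ : Measure Ω) (X : Ω → 𝒳) (S : Ω → 𝒮) (fstar : 𝒳 → 𝒮 → ℝ)
    (T : Finset ℝ) (B : ι → Set ℝ) (ℓ : ι → ℝ) (s : 𝒮) (c : ι → ℝ) : ℝ :=
  ∫ ω, gmax T (score (μ.real (S ⁻¹' {s})) (lagrangeTerm B ℓ c) · (fstar (X ω) s)) ∂(μ[|S ⁻¹' {s}])

variable {μ : Measure Ω} {X : Ω → 𝒳} {S : Ω → 𝒮} {Y : Ω → ℝ} {T : Finset ℝ} {B : ι → Set ℝ}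
  {ℓ : ι → ℝ} {lam : 𝒮 → ι → ℝ} {fstar g : 𝒳 → 𝒮 → ℝ}

theorem groupDual_Iic {M : ℕ} (z ℓ c : Fin M → ℝ) (s : 𝒮) :
    groupDual μ X S fstar T (fun m => Set.Iic (z m)) ℓ s c
      = ∫ ω, gmax T (fun y => -(μ (S ⁻¹' {s})).toReal * (y - fstar (X ω) s) ^ 2
          - ∑ m, c m * (aInd z y m - ℓ m)) ∂(μ[|S ⁻¹' {s}]) := by
  simp only [groupDual, score, lagrangeTerm, aInd_eq_indicator, measureReal_def]

theorem IsFair.penalizedRisk_eq [Fintype 𝒮] [Fintype ι] (hg : IsFair μ X S B ℓ g) :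
    penalizedRisk μ X S Y B ℓ lam g = squaredRisk μ X S Y g := by
  simp [penalizedRisk, hg _ _]

variable [MeasurableSpace 𝒳] [MeasurableSpace 𝒮]

theorem measurable_of_mem_predictorClass (hX : Measurable X) (hg : g ∈ predictorClass T) (s : 𝒮) :
    Measurable fun ω => g (X ω) s :=
  hg.1.of_uncurry_right.comp hX

theorem IsRegressionFunction.memLp (hreg : IsRegressionFunction μ X S Y fstar)
    (hY : MemLp Y 2 μ) : MemLp (fun ω => fstar (X ω) (S ω)) 2 μ :=
  (memLp_congr_ae hreg).2 (hY.condExp (by norm_num))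

theorem IsRegressionFunction.memLp_cond_fiber [MeasurableSingletonClass 𝒮]
    (hreg : IsRegressionFunction μ X S Y fstar) (hS : Measurable S) (hY : MemLp Y 2 μ) (s : 𝒮) :
    MemLp (fun ω => fstar (X ω) s) 2 (μ[|S ⁻¹' {s}]) :=
  _root_.memLp_cond_fiber (f := fun s ω => fstar (X ω) s) hS (hreg.memLp hY) s

variable [IsFiniteMeasure μ]

theorem memLp_of_mem_predictorClass (hX : Measurable X) (hS : Measurable S)
    (hg : g ∈ predictorClass T) (p : ENNReal) : MemLp (fun ω => g (X ω) (S ω)) p μ := by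
  obtain ⟨C, hC⟩ := T.finite_toSet.isBounded.exists_norm_le
  exact MemLp.of_bound (hg.1.comp (hX.prodMk hS)).aestronglyMeasurable C
    (ae_of_all _ fun _ => hC _ (hg.2 _ _))

theorem IsRegressionFunction.squaredRisk_eq_add (hreg : IsRegressionFunction μ X S Y fstar)
    (hX : Measurable X) (hS : Measurable S) (hY : MemLp Y 2 μ) (hg : g ∈ predictorClass T) :
    squaredRisk μ X S Y g = squaredRisk μ X S Y fstar
      + ∫ ω, (g (X ω) (S ω) - fstar (X ω) (S ω)) ^ 2 ∂μ := by
  have hGm : AEStronglyMeasurable[MeasurableSpace.comap (fun ω => (X ω, S ω)) inferInstance]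
      (fun ω => g (X ω) (S ω)) μ :=
    (hg.1.comp (comap_measurable _)).aestronglyMeasurable
  refine (integral_sub_sq_eq_add_of_condExp (hX.prodMk hS).comap_le hY
    (memLp_of_mem_predictorClass hX hS hg 2) hGm).trans ?_
  congr 1 <;> refine integral_congr_ae (hreg.mono fun ω hω => ?_) <;> simp only [hω]

variable [MeasurableSingletonClass 𝒮] [Fintype ι]

theorem integral_score_predictor (hX : Measurable X) (hS : Measurable S)
    (hF : MemLp (fun ω => fstar (X ω) (S ω)) 2 μ) (hg : g ∈ predictorClass T) {s : 𝒮}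
    (hs : μ (S ⁻¹' {s}) ≠ 0) (p : ℝ) (c : ι → ℝ) :
    ∫ ω, score p (lagrangeTerm B ℓ c) (g (X ω) s) (fstar (X ω) s) ∂(μ[|S ⁻¹' {s}])
      = -(p * ∫ ω, (g (X ω) s - fstar (X ω) s) ^ 2 ∂(μ[|S ⁻¹' {s}]))
        - ∑ m, c m * (condProb μ S s {ω | g (X ω) s ∈ B m} - ℓ m) := by
  have := cond_isProbabilityMeasure hs
  have hgs := measurable_of_mem_predictorClass hX hg s
  have hsq : Integrable (fun ω => (g (X ω) s - fstar (X ω) s) ^ 2) (μ[|S ⁻¹' {s}]) :=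
    (memLp_cond_fiber (f := fun s ω => g (X ω) s - fstar (X ω) s) hS
      ((memLp_of_mem_predictorClass hX hS hg 2).sub hF) s).integrable_sq
  have hterm : Integrable (fun ω => lagrangeTerm B ℓ c (g (X ω) s)) (μ[|S ⁻¹' {s}]) :=
    integrable_comp_of_forall_mem hgs (fun ω => hg.2 _ s)
      (Φ := fun y _ => lagrangeTerm B ℓ c y) fun _ _ => integrable_const _
  simp only [score]
  rw [integral_sub (hsq.const_mul _) hterm, integral_const_mul, neg_mul,
    integral_lagrangeTerm_comp hgs fun ω => hg.2 _ s]
  rfl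

variable [Fintype 𝒮]

theorem penalizedRisk_eq_sub_sum_integral_score (hX : Measurable X) (hS : Measurable S)
    (hπ : ∀ s, μ (S ⁻¹' {s}) ≠ 0) (hY : MemLp Y 2 μ)
    (hreg : IsRegressionFunction μ X S Y fstar) (hg : g ∈ predictorClass T) :
    penalizedRisk μ X S Y B ℓ lam g = squaredRisk μ X S Y fstar
      - ∑ s, ∫ ω, score (μ.real (S ⁻¹' {s})) (lagrangeTerm B ℓ (lam s)) (g (X ω) s)
          (fstar (X ω) s) ∂(μ[|S ⁻¹' {s}]) := by
  have hF := hreg.memLp hY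
  have hdisint : ∫ ω, (g (X ω) (S ω) - fstar (X ω) (S ω)) ^ 2 ∂μ
      = ∑ s, μ.real (S ⁻¹' {s}) * ∫ ω, (g (X ω) s - fstar (X ω) s) ^ 2 ∂(μ[|S ⁻¹' {s}]) :=
    integral_eq_sum_integral_cond_fiber (f := fun s ω => (g (X ω) s - fstar (X ω) s) ^ 2) hS
      ((memLp_of_mem_predictorClass hX hS hg 2).sub hF).integrable_sq
  simp only [penalizedRisk, hreg.squaredRisk_eq_add hX hS hY hg, hdisint,
    integral_score_predictor hX hS hF hg (hπ _), Finset.sum_sub_distrib, Finset.sum_neg_distrib]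
  ring

theorem penalizedRisk_le_of_score_le {g' : 𝒳 → 𝒮 → ℝ} (hX : Measurable X) (hS : Measurable S)
    (hπ : ∀ s, μ (S ⁻¹' {s}) ≠ 0) (hY : MemLp Y 2 μ)
    (hreg : IsRegressionFunction μ X S Y fstar) (hg : g ∈ predictorClass T)
    (hg' : g' ∈ predictorClass T)
    (hle : ∀ x s, score (μ.real (S ⁻¹' {s})) (lagrangeTerm B ℓ (lam s)) (g' x s) (fstar x s)
      ≤ score (μ.real (S ⁻¹' {s})) (lagrangeTerm B ℓ (lam s)) (g x s) (fstar x s)) :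
    penalizedRisk μ X S Y B ℓ lam g ≤ penalizedRisk μ X S Y B ℓ lam g' := by
  have hint : ∀ {h : 𝒳 → 𝒮 → ℝ}, h ∈ predictorClass T → ∀ s, Integrable
      (fun ω => score (μ.real (S ⁻¹' {s})) (lagrangeTerm B ℓ (lam s)) (h (X ω) s) (fstar (X ω) s))
      (μ[|S ⁻¹' {s}]) := fun hh s =>
    integrable_comp_of_forall_mem (measurable_of_mem_predictorClass hX hh s)
      (fun _ => hh.2 _ _) fun y _ => integrable_score_comp (hreg.memLp_cond_fiber hS hY s) y
  rw [penalizedRisk_eq_sub_sum_integral_score hX hS hπ hY hreg hg,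
    penalizedRisk_eq_sub_sum_integral_score hX hS hπ hY hreg hg']
  exact sub_le_sub_left (Finset.sum_le_sum fun s _ =>
    integral_mono (hint hg' s) (hint hg s) fun ω => hle _ _) _

theorem exists_isFair_isMinOn_penalizedRisk (hX : Measurable X) (hS : Measurable S)
    (hπ : ∀ s, μ (S ⁻¹' {s}) ≠ 0) (hY : MemLp Y 2 μ) (hfstar : Measurable (uncurry fstar))
    (hreg : IsRegressionFunction μ X S Y fstar)
    (hcont : ∀ s, Continuous fun t => condProb μ S s {ω | fstar (X ω) s ≤ t})
    (hT : T.Nonempty)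
    (hmin : ∀ s c, groupDual μ X S fstar T B ℓ s (lam s) ≤ groupDual μ X S fstar T B ℓ s c) :
    ∃ g ∈ predictorClass T, IsFair μ X S B ℓ g ∧
      IsMinOn (penalizedRisk μ X S Y B ℓ lam) (predictorClass T) g := by
  have : Nonempty T := hT.to_subtype
  choose σ hσ hmax using fun s => exists_measurable_argmax fun y : T =>
    measurable_score (p := μ.real (S ⁻¹' {s})) (c := lagrangeTerm B ℓ (lam s)) (y : ℝ)
  have hg : (fun x s => (σ s (fstar x s) : ℝ)) ∈ predictorClass T := by
    refine ⟨measurable_from_prod_countable_left fun s => ?_, fun x s => (σ s _).2⟩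
    exact measurable_subtype_coe.comp ((hσ s).comp hfstar.of_uncurry_right)
  refine ⟨_, hg, fun s m => ?_, isMinOn_iff.2 fun g' hg' =>
    penalizedRisk_le_of_score_le hX hS hπ hY hreg hg hg' fun x s => hmax s _ ⟨_, hg'.2 x s⟩⟩
  have := cond_isProbabilityMeasure (hπ s)
  have hFs : Measurable fun ω => fstar (X ω) s := hfstar.of_uncurry_right.comp hX
  have : NullSingletonClass ((μ[|S ⁻¹' {s}]).map fun ω => fstar (X ω) s) :=
    nullSingletonClass_map_of_continuous hFs (hcont s)
  exact measureReal_argmax_mem_eq_of_dual_min (ENNReal.toReal_ne_zero.2 ⟨hπ s, measure_ne_top _ _⟩)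
    hFs (hreg.memLp_cond_fiber hS hY s) (hmin s) (hσ s) (hmax s) m

end Predictor
end FairReg

open FairReg in
theorem optimal_lZ_fair_minimizes_penalized_risk_general
    {Ω 𝒳 𝒮 ι : Type*} [MeasurableSpace Ω] [MeasurableSpace 𝒳] [Fintype 𝒮] [Nonempty 𝒮]
    [MeasurableSpace 𝒮] [MeasurableSingletonClass 𝒮] [Fintype ι]
    {μ : Measure Ω} [IsFiniteMeasure μ] {X : Ω → 𝒳} {S : Ω → 𝒮} {Y : Ω → ℝ}
    (hX : Measurable X) (hS : Measurable S) (hY : MemLp Y 2 μ)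
    (hπ : ∀ s, 0 < μ.real (S ⁻¹' {s})) {T : Finset ℝ} {B : ι → Set ℝ} {ℓ : ι → ℝ}
    {fstar : 𝒳 → 𝒮 → ℝ} (hfstar : Measurable (uncurry fstar))
    (hreg : IsRegressionFunction μ X S Y fstar)
    (hcont : ∀ s, Continuous fun t => condProb μ S s {ω | fstar (X ω) s ≤ t})
    {ffair : 𝒳 → 𝒮 → ℝ} (hffair : ffair ∈ predictorClass T) (hfair : IsFair μ X S B ℓ ffair)
    (hopt : IsMinOn (squaredRisk μ X S Y) (predictorClass T ∩ {g | IsFair μ X S B ℓ g}) ffair)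
    {lam : 𝒮 → ι → ℝ}
    (hlam : IsMinOn (fun lam' : 𝒮 → ι → ℝ => ∑ s, groupDual μ X S fstar T B ℓ s (lam' s))
      Set.univ lam) :
    IsMinOn (penalizedRisk μ X S Y B ℓ lam) (predictorClass T) ffair := by
  have hπ' : ∀ s, μ (S ⁻¹' {s}) ≠ 0 := fun s => (measureReal_ne_zero_iff).1 (hπ s).ne'
  have hT : T.Nonempty := by
    obtain ⟨ω, -⟩ := nonempty_of_measure_ne_zero (hπ' (Classical.arbitrary 𝒮))
    exact ⟨_, hffair.2 (X ω) (S ω)⟩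
  obtain ⟨g, hg, hgfair, hgmin⟩ := exists_isFair_isMinOn_penalizedRisk hX hS hπ' hY hfstar hreg
    hcont hT (apply_le_apply_of_forall_sum_le_sum (isMinOn_univ_iff.1 hlam))
  refine isMinOn_iff.2 fun g' hg' => ?_
  calc penalizedRisk μ X S Y B ℓ lam ffair = squaredRisk μ X S Y ffair := hfair.penalizedRisk_eq
    _ ≤ squaredRisk μ X S Y g := hopt ⟨hg, hgfair⟩
    _ = penalizedRisk μ X S Y B ℓ lam g := hgfair.penalizedRisk_eq.symm
    _ ≤ penalizedRisk μ X S Y B ℓ lam g' := hgmin hg'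

/-- Under the continuity assumption, the optimal `(ℓ,𝒵)`-fair discretized
predictor is also a minimizer over `ℱ_K` of the Lagrangian-penalized risk `ℛ_{λ*}`, where
`λ*` is a minimizer of the dual objective `H`. -/
theorem optimal_lZ_fair_minimizes_penalized_risk
    {Ω 𝒮 : Type} [MeasurableSpace Ω] [Fintype 𝒮] [Nonempty 𝒮]
    [MeasurableSpace 𝒮] [MeasurableSingletonClass 𝒮]
    (μ : Measure Ω) [IsProbabilityMeasure μ]
    {d : ℕ} (X : Ω → Fin d → ℝ) (S : Ω → 𝒮) (Y : Ω → ℝ)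
    (hX : Measurable X) (hS : Measurable S) (hY : Measurable Y)
    (A : ℝ) (hA : 0 < A) (hYbd : ∀ᵐ ω ∂μ, |Y ω| ≤ A)
    (hπ : ∀ s : 𝒮, 0 < (μ (S ⁻¹' {s})).toReal)
    (K : ℕ) (hK : 2 ≤ K)
    (M : ℕ) (hM : 1 ≤ M) (ℓ : Fin M → ℝ) (z : Fin M → ℝ)
    (hℓ : ∀ m, ℓ m ∈ Set.Ioo (0 : ℝ) 1) (hℓmono : StrictMono ℓ)
    (hz : ∀ m, z m ∈ Set.Ioo (-A) A) (hzmono : StrictMono z)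
    -- `f*` is the regression function `f*(x,s) = 𝔼[Y | X = x, S = s]`
    (fstar : (Fin d → ℝ) → 𝒮 → ℝ)
    (hfstarMeas : Measurable (Function.uncurry fstar))
    (hfstarBd : ∀ᵐ ω ∂μ, |fstar (X ω) (S ω)| ≤ A)
    (hreg : (fun ω => fstar (X ω) (S ω))
      =ᵐ[μ] μ[Y | MeasurableSpace.comap (fun ω => (X ω, S ω)) inferInstance])
    -- continuity assumption
    (hcont : ∀ s : 𝒮, Continuous fun t : ℝ =>
      FairReg.condProb μ S s {ω | fstar (X ω) s ≤ t})
    -- `ffair = f*_{(ℓ,𝒵)-fair}` is a risk-minimizer of `R` over `(ℓ,𝒵)`-fair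
    -- predictors in `ℱ_K`
    (ffair : (Fin d → ℝ) → 𝒮 → ℝ)
    (hffairMeas : Measurable (Function.uncurry ffair))
    (hffairGrid : ∀ x s, ffair x s ∈ FairReg.grid A K)
    (hffairFair : ∀ s m, FairReg.condProb μ S s {ω | ffair (X ω) s ≤ z m} = ℓ m)
    (hffairOpt : ∀ g : (Fin d → ℝ) → 𝒮 → ℝ, Measurable (Function.uncurry g) →
      (∀ x s, g x s ∈ FairReg.grid A K) →
      (∀ s m, FairReg.condProb μ S s {ω | g (X ω) s ≤ z m} = ℓ m) →
      FairReg.risk μ X S Y ffair ≤ FairReg.risk μ X S Y g)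
    -- `lam = λ*` is a minimizer of the dual objective `H`
    (lam : 𝒮 → Fin M → ℝ)
    (hlamOpt : ∀ lam' : 𝒮 → Fin M → ℝ,
      (∑ s, ∫ ω, FairReg.gmax (FairReg.grid A K)
          (fun y => -(μ (S ⁻¹' {s})).toReal * (y - fstar (X ω) s) ^ 2
            - ∑ m, lam s m * (FairReg.aInd z y m - ℓ m)) ∂(μ[|S ⁻¹' {s}]))
      ≤ ∑ s, ∫ ω, FairReg.gmax (FairReg.grid A K)
          (fun y => -(μ (S ⁻¹' {s})).toReal * (y - fstar (X ω) s) ^ 2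
            - ∑ m, lam' s m * (FairReg.aInd z y m - ℓ m)) ∂(μ[|S ⁻¹' {s}])) :
    -- conclusion: `ffair` minimizes the Lagrangian-penalized risk `ℛ_{λ*}` over `ℱ_K`
    ∀ g : (Fin d → ℝ) → 𝒮 → ℝ, Measurable (Function.uncurry g) →
      (∀ x s, g x s ∈ FairReg.grid A K) →
      FairReg.risk μ X S Y ffair
          + ∑ s, ∑ m, lam s m *
              (FairReg.condProb μ S s {ω | ffair (X ω) s ≤ z m} - ℓ m)
        ≤ FairReg.risk μ X S Y g
          + ∑ s, ∑ m, lam s m *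
              (FairReg.condProb μ S s {ω | g (X ω) s ≤ z m} - ℓ m) := by
  exact fun g hgMeas hgGrid => optimal_lZ_fair_minimizes_penalized_risk_general
    (B := fun m => Set.Iic (z m)) hX hS (MemLp.of_bound hY.aestronglyMeasurable A hYbd) hπ
    hfstarMeas hreg hcont ⟨hffairMeas, hffairGrid⟩ hffairFair
    (isMinOn_iff.2 fun g hg => hffairOpt g hg.1.1 hg.1.2 hg.2)
    (isMinOn_univ_iff.2 fun lam' => by simpa only [FairReg.groupDual_Iic] using hlamOpt lam')
    ⟨hgMeas, hgGrid⟩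
end
end

section
/- Under the continuity assumption, there exists λ* ∈ Δ_M (i.e., with Σ_{s∈𝒮} λ*_{s,m} = 0 for every m) such that a risk-minimizer f*_{𝒵-fair} of R over all 𝒵-DP-fair predictors in ℱ_K exists and admits the pointwise form f*_{𝒵-fair}(x,s) ∈ argmin_{y∈𝒴_K} { π_s (y − f*(x,s))² + ⟨λ*_s, a(y)⟩ }; moreover λ* can be chosen as a minimizer over λ ∈ Δ_M of Σ_{s∈𝒮} 𝔼_s[ max_{y∈𝒴_K} Φ^𝒵_{s,λ}(X,y) ], where Φ^𝒵_{s,λ}(x,y) := −π_s (y − f*(x,s))² − ⟨λ_s, a(y)⟩. -/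
/-!
Lagrangian duality. Write `H(λ) = ∑ s, 𝔼_s[max_y (-π_s (y - f*)² - ⟨λ_s, a(y)⟩)]` for the dual
objective and `u_s(y) = ⟨λ_s, a(y)⟩` for the penalties, which sum to zero over `s` when `λ ∈ Δ_M`.

* `H` attains its minimum over `Δ_M`: it depends on `λ` only through `u` and is unchanged when
  constants of sum zero are added to the `u_s`, while `∑ s, u_s = 0` makes `H` control the
  oscillation of every `u_s`.
* Let `λ*` be a minimizer, `f_λ` a measurable pointwise argmin for the multiplier `λ`, and
  `v ∈ Δ_M`. Inserting `f_{λ* + t v}` into the maximum defining `H(λ*)` gives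
  `H(λ*) ≥ H(λ* + t v) + t ∑ s, 𝔼_s⟨v_s, a(f_{λ* + t v})⟩`, so the last sum is nonpositive for
  `t > 0`. As `f*(X,s)` has no atoms under `ℙ_s`, the argmin at `λ*` is almost surely unique, and
  letting `t → 0` replaces `f_{λ* + t v}` by `f_{λ*}`. Taking `±v` supported on two groups and one
  threshold shows that `ℙ_s(f_{λ*} ≤ z_m)` does not depend on `s`, i.e. `f_{λ*}` is fair.
* The risk is a constant plus `∑ s, π_s 𝔼_s[(f - f*)²]`. For a fair predictor
  `∑ s, 𝔼_s⟨λ*_s, a(f)⟩ = 0`, so its risk is, up to the constant, the expectation of the Lagrangian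
  which `f_{λ*}` minimizes pointwise.
-/

open MeasureTheory ProbabilityTheory Filter Function

noncomputable section

namespace FairReg

open Set Topology
open scoped Matrix

section ArgminSelection

variable {α κ : Type*} [Finite κ]

theorem eventually_eq_of_tendsto_penalty {β : Type*} {l : Filter β} {c u : κ → ℝ}
    (hinj : Injective fun k => c k + u k) {k₀ : κ} (hk₀ : ∀ k, c k₀ + u k₀ ≤ c k + u k)
    {v : β → κ → ℝ} (hv : Tendsto v l (𝓝 u)) {i : β → κ}
    (hi : ∀ b k, c (i b) + v b (i b) ≤ c k + v b k) : ∀ᶠ b in l, i b = k₀ := by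
  have hlim : ∀ k, Tendsto (fun b => c k + v b k) l (𝓝 (c k + u k)) := fun k =>
    (tendsto_pi_nhds.1 hv k).const_add _
  have hlt : ∀ᶠ b in l, ∀ k, k ≠ k₀ → c k₀ + v b k₀ < c k + v b k :=
    eventually_all.2 fun k => eventually_imp_distrib_left.2 fun hk =>
      (hlim k₀).eventually_lt (hlim k) ((hk₀ k).lt_of_ne (hinj.ne hk.symm))
  filter_upwards [hlt] with b hb
  by_contra hne
  exact (hi b k₀).not_gt (hb _ hne)

variable [MeasurableSpace α] [MeasurableSpace κ]

theorem exists_measurable_argmin [Nonempty κ] {R : Type*} [LinearOrder R] [TopologicalSpace R]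
    [OrderClosedTopology R] [SecondCountableTopology R] [MeasurableSpace R]
    [OpensMeasurableSpace R] (c : α → κ → R) (hc : ∀ k, Measurable fun x => c x k) :
    ∃ σ : α → κ, Measurable σ ∧ ∀ x k, c x (σ x) ≤ c x k := by
  classical
  obtain ⟨e, he⟩ := exists_surjective_nat κ
  have hex : ∀ x, ∃ n, ∀ k, c x (e n) ≤ c x k := fun x => by
    obtain ⟨k, hk⟩ := Finite.exists_min (c x)
    obtain ⟨n, rfl⟩ := he k
    exact ⟨n, hk⟩
  refine ⟨fun x => e (Nat.find (hex x)), ?_, fun x => Nat.find_spec (hex x)⟩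
  refine Measurable.find (f := fun n _ => e n) (fun _ => measurable_const) (fun n => ?_) hex
  simp only [ofPred_forall]
  exact .iInter fun k => measurableSet_le (hc _) (hc k)

/-- `σ` selects, at every `x`, a minimizer of the cost `c x` penalized by `u`. -/
def IsPenalizedArgmin (c : α → κ → ℝ) (u : κ → ℝ) (σ : α → κ) : Prop :=
  ∀ x k, c x (σ x) + u (σ x) ≤ c x k + u k

theorem exists_measurable_isPenalizedArgmin [Nonempty κ] {c : α → κ → ℝ}
    (hc : ∀ k, Measurable fun x => c x k) (u : κ → ℝ) :
    ∃ σ : α → κ, Measurable σ ∧ IsPenalizedArgmin c u σ :=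
  exists_measurable_argmin (fun x k => c x k + u k) fun k => (hc k).add_const _

theorem integrable_comp_selection {E : Type*} [NormedAddCommGroup E]
    [MeasurableSingletonClass κ] {P : Measure α} {c : α → κ → E}
    (hc : ∀ k, Integrable (fun x => c x k) P) {σ : α → κ} (hσ : Measurable σ) :
    Integrable (fun x => c x (σ x)) P := by
  classical
  cases nonempty_fintype κ
  have hsum : (fun x => c x (σ x)) = fun x => ∑ k, (σ ⁻¹' {k}).indicator (fun x => c x k) x := by
    ext x
    simp [indicator_apply]
  rw [hsum]
  exact integrable_finsetSum _ fun k _ => (hc k).indicator (hσ (measurableSet_singleton k))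

theorem integrable_comp_of_finite {E : Type*} [NormedAddCommGroup E]
    [MeasurableSingletonClass κ] {P : Measure α} [IsFiniteMeasure P] (u : κ → E)
    {σ : α → κ} (hσ : Measurable σ) :
    Integrable (fun x => u (σ x)) P :=
  Integrable.of_finite.comp_measurable hσ

theorem tendsto_integral_penalty_argmin [MeasurableSingletonClass κ] {P : Measure α}
    [IsFiniteMeasure P] {c : α → κ → ℝ} {u : κ → ℝ}
    (hinj : ∀ᵐ x ∂P, Injective fun k => c x k + u k) {σ : α → κ} (hσ : IsPenalizedArgmin c u σ)
    {v : ℕ → κ → ℝ} (hv : Tendsto v atTop (𝓝 u)) {τ : ℕ → α → κ} (hτm : ∀ n, Measurable (τ n))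
    (hτ : ∀ n, IsPenalizedArgmin c (v n) (τ n)) (w : κ → ℝ) :
    Tendsto (fun n => ∫ x, w (τ n x) ∂P) atTop (𝓝 (∫ x, w (σ x) ∂P)) := by
  cases nonempty_fintype κ
  refine tendsto_integral_of_dominated_convergence (fun _ => ‖w‖)
    (fun n => (integrable_comp_of_finite w (hτm n)).aestronglyMeasurable) (integrable_const _)
    (fun n => .of_forall fun x => norm_le_pi_norm w _) ?_
  filter_upwards [hinj] with x hx
  have hev := eventually_eq_of_tendsto_penalty hx (hσ x) hv fun n => hτ n x
  exact tendsto_const_nhds.congr' (hev.mono fun n hn => congrArg w hn.symm)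

end ArgminSelection

section ExpectedMax

variable {Ω κ : Type*} [MeasurableSpace Ω] {P : Measure Ω} {c : Ω → κ → ℝ}

/-- The contribution `𝔼[max_k (-c(ω, k) - u(k))]` of a single group to the dual objective, as a
function of the penalty `u` rather than of the multiplier. -/
def expectedMax (P : Measure Ω) (c : Ω → κ → ℝ) (u : κ → ℝ) : ℝ :=
  ∫ ω, ⨆ k, (-c ω k - u k) ∂P

variable [Finite κ] [Nonempty κ]

theorem integrable_iSup {f : κ → Ω → ℝ} (hf : ∀ k, Integrable (f k) P) :
    Integrable (fun ω => ⨆ k, f k ω) P := by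
  cases nonempty_fintype κ
  have hsup : (fun ω => ⨆ k, f k ω) = Finset.univ.sup' Finset.univ_nonempty f := by
    ext ω
    rw [Finset.sup'_apply, Finset.sup'_univ_eq_ciSup]
  rw [hsup]
  exact Finset.sup'_induction _ _ (p := fun g => Integrable g P) (fun _ h₁ _ h₂ => h₁.sup h₂)
    fun k _ => hf k

theorem integrable_iSup_neg_sub [IsFiniteMeasure P] (hc : ∀ k, Integrable (fun ω => c ω k) P)
    (u : κ → ℝ) : Integrable (fun ω => ⨆ k, (-c ω k - u k)) P :=
  integrable_iSup fun k => (hc k).neg.sub (integrable_const _)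

/-- Minus the law of a penalized argmin at `v` is a subgradient of `expectedMax P c` at `v`; this
replaces the differentiability of the dual objective. -/
theorem expectedMax_add_integral_sub_le [IsFiniteMeasure P]
    [MeasurableSpace κ] [MeasurableSingletonClass κ] (hc : ∀ k, Integrable (fun ω => c ω k) P)
    (u : κ → ℝ) {v : κ → ℝ} {σ : Ω → κ} (hσm : Measurable σ) (hσ : IsPenalizedArgmin c v σ) :
    expectedMax P c v + ∫ ω, (v - u) (σ ω) ∂P ≤ expectedMax P c u := by
  have hint := integrable_comp_of_finite (P := P) (v - u) hσm
  rw [expectedMax, ← integral_add (integrable_iSup_neg_sub hc v) hint]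
  refine integral_mono ((integrable_iSup_neg_sub hc v).add hint) (integrable_iSup_neg_sub hc u)
    fun ω => ?_
  have hmax : ⨆ k, (-c ω k - v k) ≤ -c ω (σ ω) - v (σ ω) := ciSup_le fun k => by
    linarith [hσ ω k]
  have hle := Finite.le_ciSup (fun k => -c ω k - u k) (σ ω)
  simp only [Pi.sub_apply]
  linarith

variable [IsProbabilityMeasure P] (hc : ∀ k, Integrable (fun ω => c ω k) P)

include hc

theorem neg_integral_iSup_sub_le_expectedMax (u : κ → ℝ) (k : κ) :
    -∫ ω, ⨆ k, c ω k ∂P - u k ≤ expectedMax P c u := by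
  have hint : Integrable (fun ω => -⨆ k, c ω k) P := (integrable_iSup hc).neg
  calc -∫ ω, ⨆ k, c ω k ∂P - u k = ∫ ω, (-(⨆ k, c ω k) - u k) ∂P := by
        rw [integral_sub hint (integrable_const _), integral_neg]
        simp
    _ ≤ expectedMax P c u :=
        integral_mono (hint.sub (integrable_const _)) (integrable_iSup_neg_sub hc u) fun ω => by
          linarith [Finite.le_ciSup (c ω) k, Finite.le_ciSup (fun k => -c ω k - u k) k]

theorem expectedMax_le_add {u v : κ → ℝ} {r : ℝ} (h : ∀ k, v k ≤ u k + r) :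
    expectedMax P c u ≤ expectedMax P c v + r := by
  calc expectedMax P c u ≤ ∫ ω, ((⨆ k, (-c ω k - v k)) + r) ∂P :=
        integral_mono (integrable_iSup_neg_sub hc u)
          ((integrable_iSup_neg_sub hc v).add (integrable_const r)) fun ω => ciSup_le fun k => by
            linarith [h k, Finite.le_ciSup (fun k => -c ω k - v k) k]
    _ = expectedMax P c v + r := by
        rw [integral_add (integrable_iSup_neg_sub hc v) (integrable_const r)]
        simp [expectedMax]

theorem expectedMax_sub_const (u : κ → ℝ) (r : ℝ) :
    expectedMax P c (fun k => u k - r) = expectedMax P c u + r := by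
  refine le_antisymm (expectedMax_le_add hc fun k => by simp) ?_
  linarith [expectedMax_le_add hc (u := u) (v := fun k => u k - r) (r := -r) fun k => le_rfl]

theorem continuous_expectedMax : Continuous (expectedMax P c) := by
  cases nonempty_fintype κ
  refine (LipschitzWith.of_le_add fun u v => expectedMax_le_add hc fun k => ?_).continuous
  linarith [(le_abs_self _).trans (dist_le_pi_dist v u k), dist_comm u v]

end ExpectedMax

section Duality

/-- The families indexed by `𝒮` with sum zero. With values in `ι → ℝ` these are the multipliers
`Δ_M`; with values in `κ → ℝ` they contain the penalties which such multipliers induce. -/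
def zeroSum (𝒮 E : Type*) [Fintype 𝒮] [AddCommGroup E] [Module ℝ E] : Submodule ℝ (𝒮 → E) :=
  LinearMap.ker (∑ s, LinearMap.proj s)

theorem mem_zeroSum {𝒮 E : Type*} [Fintype 𝒮] [AddCommGroup E] [Module ℝ E] {v : 𝒮 → E} :
    v ∈ zeroSum 𝒮 E ↔ ∑ s, v s = 0 := by
  simp [zeroSum, LinearMap.sum_apply]

theorem mem_zeroSum_pi {𝒮 ι : Type*} [Fintype 𝒮] {v : 𝒮 → ι → ℝ} :
    v ∈ zeroSum 𝒮 (ι → ℝ) ↔ ∀ i, ∑ s, v s i = 0 := by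
  simp [mem_zeroSum, funext_iff]

variable {𝒮 κ : Type*} [Fintype 𝒮]

/-- Evaluate the lower bound of the `s`-th term at `k'` and those of all other terms at `k`: because
`u` sums to zero, only the difference `u s k - u s k'` survives. -/
theorem sub_le_sum_add_sum {D : 𝒮 → (κ → ℝ) → ℝ} {C : 𝒮 → ℝ}
    (hD : ∀ s u k, -C s - u k ≤ D s u) {u : 𝒮 → κ → ℝ} (hu : u ∈ zeroSum 𝒮 (κ → ℝ)) (s : 𝒮)
    (k k' : κ) : u s k - u s k' ≤ ∑ s, D s (u s) + ∑ s, C s := by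
  classical
  have hsum : ∑ r, u r (update (fun _ => k) s k' r) = u s k' - u s k := by
    have hcongr : ∀ r, u r (update (fun _ => k) s k' r)
        = u r k + if r = s then u s k' - u s k else 0 := fun r => by
      rcases eq_or_ne r s with rfl | hr <;> simp [*]
    simp [hcongr, Finset.sum_add_distrib, mem_zeroSum_pi.1 hu k]
  have hle := Finset.sum_le_sum fun r (_ : r ∈ Finset.univ) =>
    hD r (u r) (update (fun _ => k) s k' r)
  simp only [Finset.sum_sub_distrib, Finset.sum_neg_distrib, hsum] at hle
  linarith

/-- The objective is not coercive on `U`: adding constants of sum zero to the `u s` does not change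
it. Hence it is minimized over the normalized families, those with `u s k₀ = 0`. -/
theorem exists_isMinOn_sum [Finite κ] [Nonempty κ] {D : 𝒮 → (κ → ℝ) → ℝ} {C : 𝒮 → ℝ}
    (hlow : ∀ s u k, -C s - u k ≤ D s u) (hcont : ∀ s, Continuous (D s))
    (hshift : ∀ s u r, D s (fun k => u k - r) = D s u + r)
    {U : Submodule ℝ (𝒮 → κ → ℝ)} (hU : U ≤ zeroSum 𝒮 (κ → ℝ)) :
    ∃ u ∈ U, IsMinOn (fun u => ∑ s, D s (u s)) U u := by
  cases nonempty_fintype κ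
  obtain ⟨k₀⟩ := ‹Nonempty κ›
  let H : (𝒮 → κ → ℝ) → ℝ := fun u => ∑ s, D s (u s)
  let center : (κ → ℝ) →ₗ[ℝ] κ → ℝ :=
    LinearMap.id - LinearMap.pi fun _ => (LinearMap.proj k₀ : (κ → ℝ) →ₗ[ℝ] ℝ)
  let N := center.compLeft 𝒮
  have hN : ∀ u s, N u s = fun k => u s k - u s k₀ := fun _ _ => rfl
  have hHN : ∀ u ∈ U, H (N u) = H u := fun u hu => by
    simp [H, hN, hshift, Finset.sum_add_distrib, mem_zeroSum_pi.1 (hU hu) k₀]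
  have hnorm : ∀ u ∈ U, ‖N u‖ ≤ H (N u) + ∑ s, C s := fun u hu => by
    have hosc : ∀ s k k', u s k - u s k' ≤ H u + ∑ s, C s := sub_le_sum_add_sum hlow (hU hu)
    rw [hHN u hu]
    have hnonneg : 0 ≤ H u + ∑ s, C s := by
      have hle := Finset.sum_le_sum fun s (_ : s ∈ Finset.univ) => hlow s (u s) k₀
      simp only [Finset.sum_sub_distrib, Finset.sum_neg_distrib, mem_zeroSum_pi.1 (hU hu)] at hle
      linarith
    refine (pi_norm_le_iff_of_nonneg hnonneg).2 fun s => (pi_norm_le_iff_of_nonneg hnonneg).2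
      fun k => abs_le.2 ⟨?_, hosc s k k₀⟩
    linarith [hosc s k₀ k, congrFun (hN u s) k]
  have hev : ∀ᶠ v in cocompact _ ⊓ 𝓟 (U.map N : Set (𝒮 → κ → ℝ)), H 0 ≤ H v := by
    rw [eventually_inf_principal]
    filter_upwards [tendsto_norm_cocompact_atTop.eventually_ge_atTop (H 0 + ∑ s, C s)]
    rintro _ hv ⟨u, hu, rfl⟩
    linarith [hnorm u hu]
  have hHcont : Continuous H := continuous_finsetSum _ fun s _ =>
    (hcont s).comp (continuous_apply s)
  obtain ⟨_, ⟨u, hu, rfl⟩, hmin⟩ := hHcont.continuousOn.exists_isMinOn'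
    (U.map N).closed_of_finiteDimensional (U.map N).zero_mem hev
  refine ⟨u, hu, fun u' hu' => ?_⟩
  simpa [hHN u hu, hHN u' hu'] using hmin ⟨u', hu', rfl⟩

theorem map_compLeft_zeroSum_le {E F : Type*} [AddCommGroup E] [Module ℝ E] [AddCommGroup F]
    [Module ℝ F] (f : E →ₗ[ℝ] F) : (zeroSum 𝒮 E).map (f.compLeft 𝒮) ≤ zeroSum 𝒮 F := by
  rintro _ ⟨v, hv, rfl⟩
  simp [mem_zeroSum, ← map_sum, mem_zeroSum.1 hv]

variable {Ω : Type*} [MeasurableSpace Ω] {P : 𝒮 → Measure Ω} {c : 𝒮 → Ω → κ → ℝ} [Finite κ]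
  [Nonempty κ] {ι : Type*} [Fintype ι]

theorem exists_isMinOn_expectedMax [∀ s, IsProbabilityMeasure (P s)]
    (hc : ∀ s k, Integrable (fun ω => c s ω k) (P s)) (a : Matrix ι κ ℝ) :
    ∃ l ∈ zeroSum 𝒮 (ι → ℝ),
      IsMinOn (fun l => ∑ s, expectedMax (P s) (c s) (l s ᵥ* a)) (zeroSum 𝒮 (ι → ℝ)) l := by
  obtain ⟨_, ⟨l, hl, rfl⟩, hmin⟩ := exists_isMinOn_sum
    (fun s => neg_integral_iSup_sub_le_expectedMax (hc s)) (fun s => continuous_expectedMax (hc s))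
    (fun s => expectedMax_sub_const (hc s)) (map_compLeft_zeroSum_le (𝒮 := 𝒮) a.vecMulLinear)
  exact ⟨l, hl, fun l' hl' => hmin ⟨l', hl', rfl⟩⟩

variable [∀ s, IsFiniteMeasure (P s)] [MeasurableSpace κ] [MeasurableSingletonClass κ]
  {σ : 𝒮 → Ω → κ}

theorem sum_integral_penalty_argmin_nonpos
    (hcm : ∀ s k, Measurable fun ω => c s ω k)
    (hc : ∀ s k, Integrable (fun ω => c s ω k) (P s)) {u w : 𝒮 → κ → ℝ}
    (hmin : ∀ t : ℝ, ∑ s, expectedMax (P s) (c s) (u s)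
      ≤ ∑ s, expectedMax (P s) (c s) (u s + t • w s))
    (hinj : ∀ s, ∀ᵐ ω ∂P s, Injective fun k => c s ω k + u s k)
    (hσ : ∀ s, IsPenalizedArgmin (c s) (u s) (σ s)) :
    ∑ s, ∫ ω, w s (σ s ω) ∂P s ≤ 0 := by
  let t : ℕ → ℝ := fun n => 1 / ((n : ℝ) + 1)
  choose τ hτm hτ using fun s n =>
    exists_measurable_isPenalizedArgmin (hcm s) (u s + t n • w s)
  have hv : ∀ s, Tendsto (fun n => u s + t n • w s) atTop (𝓝 (u s)) := fun s => by
    simpa [t] using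
      ((tendsto_one_div_add_atTop_nhds_zero_nat (𝕜 := ℝ)).smul_const (w s)).const_add (u s)
  refine le_of_tendsto (tendsto_finsetSum _ fun s _ =>
    tendsto_integral_penalty_argmin (hinj s) (hσ s) (hv s) (hτm s) (hτ s) (w s))
    (.of_forall fun n => ?_)
  have hsub : ∑ s, (expectedMax (P s) (c s) (u s + t n • w s) + t n * ∫ ω, w s (τ s n ω) ∂P s)
      ≤ ∑ s, expectedMax (P s) (c s) (u s) := Finset.sum_le_sum fun s _ => by
    simpa [integral_const_mul] using
      expectedMax_add_integral_sub_le (hc s) (u s) (hτm s n) (hτ s n)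
  rw [Finset.sum_add_distrib, ← Finset.mul_sum] at hsub
  have ht : 0 < t n := Nat.one_div_pos_of_nat
  exact nonpos_of_mul_nonpos_right (by linarith [hmin (t n)]) ht

theorem sum_integral_penalty_argmin_eq_zero
    (hcm : ∀ s k, Measurable fun ω => c s ω k)
    (hc : ∀ s k, Integrable (fun ω => c s ω k) (P s)) {u w : 𝒮 → κ → ℝ}
    (hmin : ∀ t : ℝ, ∑ s, expectedMax (P s) (c s) (u s)
      ≤ ∑ s, expectedMax (P s) (c s) (u s + t • w s))
    (hinj : ∀ s, ∀ᵐ ω ∂P s, Injective fun k => c s ω k + u s k)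
    (hσ : ∀ s, IsPenalizedArgmin (c s) (u s) (σ s)) :
    ∑ s, ∫ ω, w s (σ s ω) ∂P s = 0 := by
  refine le_antisymm (sum_integral_penalty_argmin_nonpos hcm hc hmin hinj hσ) ?_
  have hneg := sum_integral_penalty_argmin_nonpos (w := -w) hcm hc
    (fun t => by simpa using hmin (-t)) hinj hσ
  simpa [integral_neg] using hneg

theorem integral_argmin_eq_of_isMinOn
    (hcm : ∀ s k, Measurable fun ω => c s ω k)
    (hc : ∀ s k, Integrable (fun ω => c s ω k) (P s)) {a : Matrix ι κ ℝ} {l : 𝒮 → ι → ℝ}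
    (hl : l ∈ zeroSum 𝒮 (ι → ℝ))
    (hmin : IsMinOn (fun l => ∑ s, expectedMax (P s) (c s) (l s ᵥ* a)) (zeroSum 𝒮 (ι → ℝ)) l)
    (hinj : ∀ s, ∀ᵐ ω ∂P s, Injective fun k => c s ω k + (l s ᵥ* a) k)
    (hσ : ∀ s, IsPenalizedArgmin (c s) (l s ᵥ* a) (σ s)) (i : ι) (s s' : 𝒮) :
    ∫ ω, a i (σ s ω) ∂P s = ∫ ω, a i (σ s' ω) ∂P s' := by
  classical
  let v : 𝒮 → ι → ℝ := Pi.single s (Pi.single i 1) - Pi.single s' (Pi.single i 1)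
  have hv : v ∈ zeroSum 𝒮 (ι → ℝ) := by simp [v, mem_zeroSum]
  have hsum := sum_integral_penalty_argmin_eq_zero (w := fun r => v r ᵥ* a) hcm hc
    (fun t => by
      simpa [Matrix.add_vecMul, Matrix.smul_vecMul] using
        hmin (add_mem hl (Submodule.smul_mem _ t hv))) hinj hσ
  rcases eq_or_ne s s' with rfl | hne
  · rfl
  rw [Fintype.sum_eq_add s s' hne fun r hr => by simp [v, hr.1, hr.2]] at hsum
  simp only [v, Pi.sub_apply, Pi.single_eq_same, Pi.single_eq_of_ne hne,
    Pi.single_eq_of_ne hne.symm, sub_zero, zero_sub, Matrix.neg_vecMul, Matrix.single_one_vecMul,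
    Pi.neg_apply, integral_neg] at hsum
  exact eq_of_sub_eq_zero hsum

end Duality

section Lagrangian

variable {𝒮 ι κ Ω : Type*} [Fintype 𝒮] [Fintype ι] [Finite κ] [MeasurableSpace κ]
  [MeasurableSingletonClass κ] [MeasurableSpace Ω] {P : 𝒮 → Measure Ω} [∀ s, IsFiniteMeasure (P s)]
  {a : Matrix ι κ ℝ} {l : 𝒮 → ι → ℝ}

theorem sum_integral_vecMul_eq_zero (hl : l ∈ zeroSum 𝒮 (ι → ℝ)) {τ : 𝒮 → Ω → κ}
    (hτ : ∀ s, Measurable (τ s)) {q : ι → ℝ} (hq : ∀ s i, ∫ ω, a i (τ s ω) ∂P s = q i) :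
    ∑ s, ∫ ω, (l s ᵥ* a) (τ s ω) ∂P s = 0 := by
  have hint : ∀ s, ∫ ω, (l s ᵥ* a) (τ s ω) ∂P s = ∑ i, l s i * q i := fun s => by
    simp only [Matrix.vecMul, dotProduct]
    rw [integral_finsetSum _ fun i _ => (integrable_comp_of_finite (a i) (hτ s)).const_mul _]
    simp only [integral_const_mul, hq]
  simp_rw [hint]
  rw [Finset.sum_comm]
  simp [← Finset.sum_mul, mem_zeroSum_pi.1 hl]

theorem sum_integral_add_vecMul {c : 𝒮 → Ω → κ → ℝ}
    (hc : ∀ s k, Integrable (fun ω => c s ω k) (P s)) (hl : l ∈ zeroSum 𝒮 (ι → ℝ))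
    {τ : 𝒮 → Ω → κ} (hτ : ∀ s, Measurable (τ s)) {q : ι → ℝ}
    (hq : ∀ s i, ∫ ω, a i (τ s ω) ∂P s = q i) :
    ∑ s, ∫ ω, (c s ω (τ s ω) + (l s ᵥ* a) (τ s ω)) ∂P s = ∑ s, ∫ ω, c s ω (τ s ω) ∂P s := by
  simp_rw [integral_add (integrable_comp_selection (hc _) (hτ _))
    (integrable_comp_of_finite _ (hτ _))]
  rw [Finset.sum_add_distrib, sum_integral_vecMul_eq_zero hl hτ hq, add_zero]

theorem sum_integral_argmin_le {c : 𝒮 → Ω → κ → ℝ}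
    (hc : ∀ s k, Integrable (fun ω => c s ω k) (P s)) (hl : l ∈ zeroSum 𝒮 (ι → ℝ))
    {σ τ : 𝒮 → Ω → κ} (hσ : ∀ s, IsPenalizedArgmin (c s) (l s ᵥ* a) (σ s))
    (hσm : ∀ s, Measurable (σ s)) (hτm : ∀ s, Measurable (τ s)) {q r : ι → ℝ}
    (hq : ∀ s i, ∫ ω, a i (σ s ω) ∂P s = q i) (hr : ∀ s i, ∫ ω, a i (τ s ω) ∂P s = r i) :
    ∑ s, ∫ ω, c s ω (σ s ω) ∂P s ≤ ∑ s, ∫ ω, c s ω (τ s ω) ∂P s := by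
  have hint : ∀ s {ρ : Ω → κ}, Measurable ρ →
      Integrable (fun ω => c s ω (ρ ω) + (l s ᵥ* a) (ρ ω)) (P s) := fun s _ hρ =>
    (integrable_comp_selection (hc s) hρ).add (integrable_comp_of_finite _ hρ)
  rw [← sum_integral_add_vecMul hc hl hσm hq, ← sum_integral_add_vecMul hc hl hτm hr]
  exact Finset.sum_le_sum fun s _ =>
    integral_mono (hint s (hσm s)) (hint s (hτm s)) fun ω => hσ s ω (τ s ω)

end Lagrangian

section NoTies

theorem nullSingletonClass_of_continuous_measure_Iic {ν : Measure ℝ} [IsProbabilityMeasure ν]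
    (h : Continuous fun t => ν.real (Iic t)) : NullSingletonClass ν := by
  have hcdf : Continuous (cdf ν) := h.congr fun t => (cdf_eq_real ν t).symm
  refine ⟨fun t => ?_⟩
  rw [← measure_cdf ν, StieltjesFunction.measure_singleton,
    hcdf.continuousWithinAt.leftLim_eq, sub_self, ENNReal.ofReal_zero]

theorem ae_injective_mul_sq_sub_add {κ : Type*} [Countable κ] {ν : Measure ℝ} [NullSingletonClass ν]
    {p : ℝ} (hp : p ≠ 0) {v : κ → ℝ} (hv : Injective v) (u : κ → ℝ) :
    ∀ᵐ t ∂ν, Injective fun k => p * (v k - t) ^ 2 + u k := by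
  have hpair : ∀ k k', k ≠ k' → ∀ᵐ t ∂ν, p * (v k - t) ^ 2 + u k ≠ p * (v k' - t) ^ 2 + u k' := by
    intro k k' hk
    refine Set.Subsingleton.measure_zero (fun t ht t' ht' => ?_) ν
    simp only [mem_compl_iff, mem_ofPred_eq, not_not] at ht ht'
    have hlin : 2 * p * (v k - v k') * (t - t') = 0 := by linear_combination ht' - ht
    simpa [hp, sub_eq_zero, hv.ne hk] using hlin
  have hall : ∀ᵐ t ∂ν, ∀ k k', k ≠ k' → p * (v k - t) ^ 2 + u k ≠ p * (v k' - t) ^ 2 + u k' := by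
    simpa only [ae_all_iff] using hpair
  filter_upwards [hall] with t ht k k' hkk'
  exact not_imp_not.1 (ht k k') hkk'

end NoTies

section CondExp

variable {Ω : Type*} {m m0 : MeasurableSpace Ω} {μ : Measure Ω} [IsFiniteMeasure μ]

theorem integral_mul_sub_condExp_eq_zero (hm : m ≤ m0) {D Y : Ω → ℝ} (hD : StronglyMeasurable[m] D)
    (hD2 : MemLp D 2 μ) (hY : MemLp Y 2 μ) : ∫ ω, D ω * (Y ω - (μ[Y | m]) ω) ∂μ = 0 := by
  have hYE : MemLp (Y - μ[Y | m]) 2 μ := hY.sub (hY.condExp one_le_two)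
  have hYi : Integrable Y μ := hY.integrable one_le_two
  have hresid : μ[Y - μ[Y | m] | m] =ᵐ[μ] 0 := by
    filter_upwards [condExp_sub hYi (integrable_condExp (f := Y) (m := m)) m,
      condExp_condExp_of_le (μ := μ) (f := Y) le_rfl hm] with ω h1 h2
    simp [h1, h2]
  calc ∫ ω, D ω * (Y ω - (μ[Y | m]) ω) ∂μ
      = ∫ ω, (μ[D * (Y - μ[Y | m]) | m]) ω ∂μ := (integral_condExp hm).symm
    _ = ∫ _, 0 ∂μ := integral_congr_ae <| by
        filter_upwards [condExp_mul_of_stronglyMeasurable_left hD (hD2.integrable_mul hYE)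
          (hYE.integrable one_le_two), hresid] with ω h1 h2
        simp [h1, h2]
    _ = 0 := by simp

theorem integral_sq_sub_eq_add_integral_sq_condExp_sub (hm : m ≤ m0) {Y g : Ω → ℝ}
    (hY : MemLp Y 2 μ) (hg : MemLp g 2 μ) (hgm : StronglyMeasurable[m] g) :
    ∫ ω, (Y ω - g ω) ^ 2 ∂μ
      = ∫ ω, (Y ω - (μ[Y | m]) ω) ^ 2 ∂μ + ∫ ω, (g ω - (μ[Y | m]) ω) ^ 2 ∂μ := by
  have hE : MemLp (μ[Y | m]) 2 μ := hY.condExp one_le_two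
  have hcross : ∫ ω, (g ω - (μ[Y | m]) ω) * (Y ω - (μ[Y | m]) ω) ∂μ = 0 :=
    integral_mul_sub_condExp_eq_zero hm (hgm.sub stronglyMeasurable_condExp) (hg.sub hE) hY
  have hint : Integrable (fun ω => (g ω - (μ[Y | m]) ω) * (Y ω - (μ[Y | m]) ω)) μ :=
    (hg.sub hE).integrable_mul (hY.sub hE)
  have hYE : Integrable (fun ω => (Y ω - (μ[Y | m]) ω) ^ 2) μ := (hY.sub hE).integrable_sq
  have hgE : Integrable (fun ω => (g ω - (μ[Y | m]) ω) ^ 2) μ := (hg.sub hE).integrable_sq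
  calc ∫ ω, (Y ω - g ω) ^ 2 ∂μ
      = ∫ ω, ((Y ω - (μ[Y | m]) ω) ^ 2 + (g ω - (μ[Y | m]) ω) ^ 2
          - 2 * ((g ω - (μ[Y | m]) ω) * (Y ω - (μ[Y | m]) ω))) ∂μ := by
        congr with ω
        ring
    _ = _ := by
        rw [integral_sub (hYE.fun_add hgE) (hint.const_mul 2), integral_add hYE hgE,
          integral_const_mul, hcross, mul_zero, sub_zero]

end CondExp

section Disintegration

variable {Ω 𝒮 E : Type*} [MeasurableSpace Ω] [MeasurableSpace 𝒮] [MeasurableSingletonClass 𝒮]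
  {μ : Measure Ω} {S : Ω → 𝒮} [NormedAddCommGroup E]

theorem ae_cond_fiber_eq {β : Type*} (hS : Measurable S) (φ : 𝒮 → Ω → β) (s : 𝒮) :
    (fun ω => φ (S ω) ω) =ᵐ[μ[|S ⁻¹' {s}]] φ s := by
  filter_upwards [ae_cond_mem (hS (measurableSet_singleton s))] with ω (hω : S ω = s)
  rw [hω]

theorem memLp_cond_fiber (hS : Measurable S) {φ : 𝒮 → Ω → E} {p : ENNReal}
    (hφ : MemLp (fun ω => φ (S ω) ω) p μ) {s : 𝒮} (hs : μ (S ⁻¹' {s}) ≠ 0) :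
    MemLp (φ s) p μ[|S ⁻¹' {s}] :=
  ((hφ.restrict _).smul_measure (ENNReal.inv_ne_top.2 hs)).ae_eq (ae_cond_fiber_eq hS φ s)

theorem integral_eq_sum_integral_cond_fiber [Fintype 𝒮] [NormedSpace ℝ E] [IsFiniteMeasure μ]
    (hS : Measurable S) {φ : 𝒮 → Ω → E} (hφ : Integrable (fun ω => φ (S ω) ω) μ) :
    ∫ ω, φ (S ω) ω ∂μ
      = ∑ s, (μ (S ⁻¹' {s})).toReal • ∫ ω, φ s ω ∂μ[|S ⁻¹' {s}] := by
  have hdis := sum_meas_smul_cond_fiber hS μ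
  rw [← hdis] at hφ
  calc ∫ ω, φ (S ω) ω ∂μ
      = ∫ ω, φ (S ω) ω ∂(∑ s, μ (S ⁻¹' {s}) • μ[|S ⁻¹' {s}]) := by rw [hdis]
    _ = ∑ s, ∫ ω, φ (S ω) ω ∂(μ (S ⁻¹' {s}) • μ[|S ⁻¹' {s}]) :=
        integral_finsetSum_measure (integrable_finsetSum_measure.1 hφ)
    _ = ∑ s, (μ (S ⁻¹' {s})).toReal • ∫ ω, φ s ω ∂μ[|S ⁻¹' {s}] :=
        Finset.sum_congr rfl fun s _ => by
          rw [integral_smul_measure, integral_congr_ae (ae_cond_fiber_eq hS φ s)]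

end Disintegration

section Predictors

variable {Ω : Type*} [MeasurableSpace Ω] {P : Measure Ω}

theorem memLp_of_forall_mem_finset [IsFiniteMeasure P] {G : Finset ℝ} {h : Ω → ℝ}
    (hh : Measurable h) (hG : ∀ ω, h ω ∈ G) (p : ENNReal) : MemLp h p P := by
  obtain ⟨C, hC⟩ := G.finite_toSet.isBounded.exists_norm_le
  exact .of_bound hh.aestronglyMeasurable C (.of_forall fun ω => hC _ (hG ω))

/-- The weighted squared error `p (y - f x)²`, as the cost of the actions `y ∈ G`. -/
def sqCost {α : Type*} (G : Finset ℝ) (p : ℝ) (f : α → ℝ) (x : α) (y : G) : ℝ := p * (y - f x) ^ 2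

theorem integrable_sqCost [IsFiniteMeasure P] {F : Ω → ℝ} (hF : MemLp F 2 P) (G : Finset ℝ)
    (p : ℝ) (y : G) : Integrable (fun ω => sqCost G p F ω y) P :=
  (((memLp_const (y : ℝ)).sub hF).integrable_sq).const_mul p

theorem measurable_sqCost {F : Ω → ℝ} (hF : Measurable F) (G : Finset ℝ) (p : ℝ) (y : G) :
    Measurable fun ω => sqCost G p F ω y := by
  unfold sqCost
  fun_prop

theorem ae_injective_sqCost_add [IsProbabilityMeasure P] {F : Ω → ℝ} (hF : Measurable F)
    (hcont : Continuous fun t => (P {ω | F ω ≤ t}).toReal) {G : Finset ℝ} {p : ℝ} (hp : p ≠ 0)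
    (u : G → ℝ) : ∀ᵐ ω ∂P, Injective fun y => sqCost G p F ω y + u y := by
  have := Measure.isProbabilityMeasure_map (μ := P) hF.aemeasurable
  have : NullSingletonClass (P.map F) :=
    nullSingletonClass_of_continuous_measure_Iic <| hcont.congr fun t =>
      (map_measureReal_apply hF measurableSet_Iic).symm
  exact ae_of_ae_map hF.aemeasurable (ae_injective_mul_sq_sub_add hp Subtype.val_injective u)

variable {M : ℕ}

/-- The matrix of the statistics `a(y)`, `y ∈ G`, so that the penalty `⟨λ_s, a(y)⟩` is
`(λ_s ᵥ* thresholdMatrix G z) y`. -/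
def thresholdMatrix (G : Finset ℝ) (z : Fin M → ℝ) : Matrix (Fin M) G ℝ :=
  Matrix.of fun m y => aInd z y m

theorem expectedMax_sqCost (G : Finset ℝ) (p : ℝ) (F : Ω → ℝ) (z v : Fin M → ℝ) :
    expectedMax P (sqCost G p F) (v ᵥ* thresholdMatrix G z)
      = ∫ ω, gmax G (fun y => -p * (y - F ω) ^ 2 - ∑ m, v m * aInd z y m) ∂P := by
  simp only [expectedMax, gmax, sSup_image', neg_mul]
  rfl

theorem integrable_aInd [IsFiniteMeasure P] {h : Ω → ℝ} (hh : Measurable h) (z : Fin M → ℝ)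
    (m : Fin M) : Integrable (fun ω => aInd z (h ω) m) P :=
  (integrable_const (1 : ℝ)).indicator (measurableSet_le hh measurable_const)

theorem integral_aInd {h : Ω → ℝ} (hh : Measurable h) (z : Fin M → ℝ) (m : Fin M) :
    ∫ ω, aInd z (h ω) m ∂P = (P {ω | h ω ≤ z m}).toReal :=
  integral_indicator_one (measurableSet_le hh measurable_const)

variable {𝒳 𝒮 : Type*}

/-- `𝒵`-DP-fairness of the predictor `g`: the thresholds `z m` are met with the same probability
in every group as overall. -/
def IsDPFair (μ : Measure Ω) (X : Ω → 𝒳) (S : Ω → 𝒮) (z : Fin M → ℝ) (g : 𝒳 → 𝒮 → ℝ) : Prop :=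
  ∀ s m, condProb μ S s {ω | g (X ω) s ≤ z m} = (μ {ω | g (X ω) (S ω) ≤ z m}).toReal

variable [MeasurableSpace 𝒳] [MeasurableSpace 𝒮] {μ : Measure Ω} {X : Ω → 𝒳} {S : Ω → 𝒮}
  {g : 𝒳 → 𝒮 → ℝ}

theorem measurable_group_predictor (hX : Measurable X) (hg : Measurable (uncurry g)) (s : 𝒮) :
    Measurable fun ω => g (X ω) s :=
  hg.comp (hX.prodMk measurable_const)

theorem IsDPFair.integral_aInd_eq {z : Fin M → ℝ} (hfair : IsDPFair μ X S z g)
    (hX : Measurable X) (hg : Measurable (uncurry g)) (s : 𝒮) (m : Fin M) :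
    ∫ ω, aInd z (g (X ω) s) m ∂μ[|S ⁻¹' {s}] = (μ {ω | g (X ω) (S ω) ≤ z m}).toReal :=
  (integral_aInd (measurable_group_predictor hX hg s) z m).trans (hfair s m)

variable [MeasurableSingletonClass 𝒮]

theorem isDPFair_of_integral_aInd_eq [Finite 𝒮] [IsProbabilityMeasure μ] {z : Fin M → ℝ}
    (hX : Measurable X) (hS : Measurable S) (hg : Measurable (uncurry g))
    (h : ∀ m s s', ∫ ω, aInd z (g (X ω) s) m ∂μ[|S ⁻¹' {s}]
      = ∫ ω, aInd z (g (X ω) s') m ∂μ[|S ⁻¹' {s'}]) :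
    IsDPFair μ X S z g := by
  cases nonempty_fintype 𝒮
  intro s m
  have hgXS : Measurable fun ω => g (X ω) (S ω) := hg.comp (hX.prodMk hS)
  have hone : ∑ r, (μ (S ⁻¹' {r})).toReal = 1 := by
    simpa [Measure.real] using sum_measureReal_preimage_singleton (μ := μ) (f := S) Finset.univ
      fun r _ => hS (measurableSet_singleton r)
  calc condProb μ S s {ω | g (X ω) s ≤ z m}
      = ∫ ω, aInd z (g (X ω) s) m ∂μ[|S ⁻¹' {s}] :=
        (integral_aInd (measurable_group_predictor hX hg s) z m).symm
    _ = ∑ r, (μ (S ⁻¹' {r})).toReal * ∫ ω, aInd z (g (X ω) r) m ∂μ[|S ⁻¹' {r}] := by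
        simp_rw [fun r => h m r s, ← Finset.sum_mul, hone, one_mul]
    _ = ∫ ω, aInd z (g (X ω) (S ω)) m ∂μ :=
        (integral_eq_sum_integral_cond_fiber hS (φ := fun r ω => aInd z (g (X ω) r) m)
          (integrable_aInd hgXS z m)).symm
    _ = (μ {ω | g (X ω) (S ω) ≤ z m}).toReal := integral_aInd hgXS z m

variable [Fintype 𝒮]

theorem integral_sq_sub_eq_add_sum_integral_sqCost [IsFiniteMeasure μ] {Y : Ω → ℝ}
    {fstar : 𝒳 → 𝒮 → ℝ} {G : Finset ℝ} (hX : Measurable X) (hS : Measurable S) (hY : MemLp Y 2 μ)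
    (hreg : (fun ω => fstar (X ω) (S ω))
      =ᵐ[μ] μ[Y | MeasurableSpace.comap (fun ω => (X ω, S ω)) inferInstance])
    (hg : Measurable (uncurry g)) (hG : ∀ x s, g x s ∈ G) :
    ∫ ω, (Y ω - g (X ω) (S ω)) ^ 2 ∂μ = ∫ ω, (Y ω - fstar (X ω) (S ω)) ^ 2 ∂μ
      + ∑ s, ∫ ω, sqCost G (μ (S ⁻¹' {s})).toReal (fun ω => fstar (X ω) s) ω ⟨g (X ω) s, hG _ s⟩
        ∂μ[|S ⁻¹' {s}] := by
  have hXS : Measurable fun ω => (X ω, S ω) := hX.prodMk hS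
  have hg2 : MemLp (fun ω => g (X ω) (S ω)) 2 μ :=
    memLp_of_forall_mem_finset (hg.comp hXS) (fun ω => hG _ _) 2
  have hf2 : MemLp (fun ω => fstar (X ω) (S ω)) 2 μ := (hY.condExp one_le_two).ae_eq hreg.symm
  rw [integral_sq_sub_eq_add_integral_sq_condExp_sub hXS.comap_le hY hg2
    (hg.comp (comap_measurable _)).stronglyMeasurable]
  congr 1
  · exact integral_congr_ae (hreg.mono fun ω hω => by simp only [hω])
  · calc ∫ ω, (g (X ω) (S ω) - _) ^ 2 ∂μ
        = ∫ ω, (g (X ω) (S ω) - fstar (X ω) (S ω)) ^ 2 ∂μ :=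
          integral_congr_ae (hreg.mono fun ω hω => by simp only [hω])
      _ = _ := by
          rw [integral_eq_sum_integral_cond_fiber hS
            (φ := fun s ω => (g (X ω) s - fstar (X ω) s) ^ 2) (hg2.sub hf2).integrable_sq]
          simp only [sqCost, integral_const_mul, smul_eq_mul]

variable {fstar : 𝒳 → 𝒮 → ℝ} {G : Finset ℝ} {z : Fin M → ℝ} {l : 𝒮 → Fin M → ℝ}
  {σ : 𝒮 → 𝒳 → G}

theorem isDPFair_of_isPenalizedArgmin [IsProbabilityMeasure μ] [Nonempty G]
    (hX : Measurable X) (hS : Measurable S) (hπ : ∀ s, μ (S ⁻¹' {s}) ≠ 0)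
    (hfstar : Measurable (uncurry fstar))
    (hf2 : ∀ s, MemLp (fun ω => fstar (X ω) s) 2 μ[|S ⁻¹' {s}])
    (hcont : ∀ s, Continuous fun t => condProb μ S s {ω | fstar (X ω) s ≤ t})
    (hl : l ∈ zeroSum 𝒮 (Fin M → ℝ))
    (hmin : IsMinOn (fun l => ∑ s, expectedMax μ[|S ⁻¹' {s}]
      (sqCost G (μ (S ⁻¹' {s})).toReal fun ω => fstar (X ω) s) (l s ᵥ* thresholdMatrix G z))
      (zeroSum 𝒮 (Fin M → ℝ)) l)
    (hσm : ∀ s, Measurable (σ s))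
    (hσ : ∀ s, IsPenalizedArgmin (sqCost G (μ (S ⁻¹' {s})).toReal fun x => fstar x s)
      (l s ᵥ* thresholdMatrix G z) (σ s)) :
    IsDPFair μ X S z fun x s => σ s x := by
  have := fun s => cond_isProbabilityMeasure (hπ s)
  have hF : ∀ s, Measurable fun ω => fstar (X ω) s := measurable_group_predictor hX hfstar
  have hp : ∀ s, (μ (S ⁻¹' {s})).toReal ≠ 0 := fun s =>
    ENNReal.toReal_ne_zero.2 ⟨hπ s, measure_ne_top _ _⟩
  exact isDPFair_of_integral_aInd_eq hX hS
    (measurable_from_prod_countable_left fun s => (hσm s).subtype_val) <|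
    integral_argmin_eq_of_isMinOn (fun s => measurable_sqCost (hF s) G _)
      (fun s => integrable_sqCost (hf2 s) G _) hl hmin
      (fun s => ae_injective_sqCost_add (hF s) (hcont s) (hp s) _) fun s ω => hσ s (X ω)

theorem integral_sq_sub_le_of_isPenalizedArgmin [IsFiniteMeasure μ] {Y : Ω → ℝ}
    (hX : Measurable X) (hS : Measurable S) (hY : MemLp Y 2 μ)
    (hreg : (fun ω => fstar (X ω) (S ω))
      =ᵐ[μ] μ[Y | MeasurableSpace.comap (fun ω => (X ω, S ω)) inferInstance])
    (hf2 : ∀ s, MemLp (fun ω => fstar (X ω) s) 2 μ[|S ⁻¹' {s}])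
    (hl : l ∈ zeroSum 𝒮 (Fin M → ℝ)) (hσm : ∀ s, Measurable (σ s))
    (hσ : ∀ s, IsPenalizedArgmin (sqCost G (μ (S ⁻¹' {s})).toReal fun x => fstar x s)
      (l s ᵥ* thresholdMatrix G z) (σ s))
    (hfair : IsDPFair μ X S z fun x s => σ s x) (hg : Measurable (uncurry g))
    (hG : ∀ x s, g x s ∈ G) (hgfair : IsDPFair μ X S z g) :
    ∫ ω, (Y ω - σ (S ω) (X ω)) ^ 2 ∂μ ≤ ∫ ω, (Y ω - g (X ω) (S ω)) ^ 2 ∂μ := by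
  have hσg : Measurable (uncurry fun x s => (σ s x : ℝ)) :=
    measurable_from_prod_countable_left fun s => (hσm s).subtype_val
  rw [integral_sq_sub_eq_add_sum_integral_sqCost hX hS hY hreg hσg fun x s => (σ s x).2,
    integral_sq_sub_eq_add_sum_integral_sqCost hX hS hY hreg hg hG]
  exact add_le_add_right (sum_integral_argmin_le (fun s => integrable_sqCost (hf2 s) G _) hl
    (fun s ω => hσ s (X ω)) (fun s => (hσm s).comp hX)
    (fun s => (measurable_group_predictor hX hg s).subtype_mk)
    (hfair.integral_aInd_eq hX hσg) (hgfair.integral_aInd_eq hX hg)) _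

end Predictors

theorem grid_nonempty (A : ℝ) {K : ℕ} (hK : K ≠ 0) : (grid A K).Nonempty :=
  (Finset.nonempty_range_iff.2 hK).image _

end FairReg

open FairReg Matrix in
theorem optimal_ZDP_fair_discretized_predictor_general
    {Ω 𝒮 𝒳 : Type*} [MeasurableSpace Ω] [Fintype 𝒮] [MeasurableSpace 𝒮]
    [MeasurableSingletonClass 𝒮] [MeasurableSpace 𝒳] (μ : Measure Ω) [IsProbabilityMeasure μ]
    {X : Ω → 𝒳} {S : Ω → 𝒮} {Y : Ω → ℝ} (hX : Measurable X) (hS : Measurable S)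
    (hY : MemLp Y 2 μ) (hπ : ∀ s : 𝒮, 0 < (μ (S ⁻¹' {s})).toReal)
    {G : Finset ℝ} (hG : G.Nonempty) {M : ℕ} (z : Fin M → ℝ)
    {fstar : 𝒳 → 𝒮 → ℝ} (hfstar : Measurable (uncurry fstar))
    (hreg : (fun ω => fstar (X ω) (S ω))
      =ᵐ[μ] μ[Y | MeasurableSpace.comap (fun ω => (X ω, S ω)) inferInstance])
    (hcont : ∀ s, Continuous fun t : ℝ => condProb μ S s {ω | fstar (X ω) s ≤ t}) :
    ∃ (lam : 𝒮 → Fin M → ℝ) (ffair : 𝒳 → 𝒮 → ℝ),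
      (∀ m, ∑ s, lam s m = 0) ∧ Measurable (uncurry ffair) ∧ (∀ x s, ffair x s ∈ G) ∧
      IsDPFair μ X S z ffair ∧
      (∀ g : 𝒳 → 𝒮 → ℝ, Measurable (uncurry g) → (∀ x s, g x s ∈ G) → IsDPFair μ X S z g →
        ∫ ω, (Y ω - ffair (X ω) (S ω)) ^ 2 ∂μ ≤ ∫ ω, (Y ω - g (X ω) (S ω)) ^ 2 ∂μ) ∧
      (∀ x s, ∀ y ∈ G,
        (μ (S ⁻¹' {s})).toReal * (ffair x s - fstar x s) ^ 2 + ∑ m, lam s m * aInd z (ffair x s) m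
          ≤ (μ (S ⁻¹' {s})).toReal * (y - fstar x s) ^ 2 + ∑ m, lam s m * aInd z y m) ∧
      (∀ lam' : 𝒮 → Fin M → ℝ, (∀ m, ∑ s, lam' s m = 0) →
        (∑ s, ∫ ω, gmax G (fun y => -(μ (S ⁻¹' {s})).toReal * (y - fstar (X ω) s) ^ 2
          - ∑ m, lam s m * aInd z y m) ∂(μ[|S ⁻¹' {s}]))
        ≤ ∑ s, ∫ ω, gmax G (fun y => -(μ (S ⁻¹' {s})).toReal * (y - fstar (X ω) s) ^ 2
          - ∑ m, lam' s m * aInd z y m) ∂(μ[|S ⁻¹' {s}])) := by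
  have hπ₀ : ∀ s, μ (S ⁻¹' {s}) ≠ 0 := fun s h => by simpa [h] using hπ s
  have := fun s => cond_isProbabilityMeasure (hπ₀ s)
  have := hG.to_subtype
  have hf2 : ∀ s, MemLp (fun ω => fstar (X ω) s) 2 μ[|S ⁻¹' {s}] := fun s =>
    memLp_cond_fiber hS (φ := fun s ω => fstar (X ω) s)
      ((hY.condExp one_le_two).ae_eq hreg.symm) (hπ₀ s)
  obtain ⟨l, hl, hmin⟩ := exists_isMinOn_expectedMax
    (fun s => integrable_sqCost (hf2 s) G (μ (S ⁻¹' {s})).toReal) (thresholdMatrix G z)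
  choose σ hσm hσ using fun s => exists_measurable_isPenalizedArgmin
    (measurable_sqCost (hfstar.of_uncurry_right (y := s)) G (μ (S ⁻¹' {s})).toReal)
    (l s ᵥ* thresholdMatrix G z)
  have hfair := isDPFair_of_isPenalizedArgmin hX hS hπ₀ hfstar hf2 hcont hl hmin hσm hσ
  refine ⟨l, fun x s => σ s x, mem_zeroSum_pi.1 hl,
    measurable_from_prod_countable_left fun s => (hσm s).subtype_val, fun x s => (σ s x).2, hfair,
    fun g => integral_sq_sub_le_of_isPenalizedArgmin hX hS hY hreg hf2 hl hσm hσ hfair,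
    fun x s y hy => hσ s x ⟨y, hy⟩, fun l' hl' => ?_⟩
  simpa only [Set.mem_ofPred_eq, expectedMax_sqCost] using hmin (mem_zeroSum_pi.2 hl')

/-- Optimal `𝒵`-DP-fair discretized predictor. Under the continuity
assumption, there exists `λ* ∈ Δ_M` such that a risk-minimizer over `𝒵`-DP-fair predictors
in `ℱ_K` exists, admits the pointwise argmin form, and `λ*` minimizes the dual objective
over `Δ_M`. -/
theorem optimal_ZDP_fair_discretized_predictor
    {Ω 𝒮 : Type} [MeasurableSpace Ω] [Fintype 𝒮] [Nonempty 𝒮]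
    [MeasurableSpace 𝒮] [MeasurableSingletonClass 𝒮]
    (μ : Measure Ω) [IsProbabilityMeasure μ]
    {d : ℕ} (X : Ω → Fin d → ℝ) (S : Ω → 𝒮) (Y : Ω → ℝ)
    (hX : Measurable X) (hS : Measurable S) (hY : Measurable Y)
    (A : ℝ) (hA : 0 < A) (hYbd : ∀ᵐ ω ∂μ, |Y ω| ≤ A)
    (hπ : ∀ s : 𝒮, 0 < (μ (S ⁻¹' {s})).toReal)
    (K : ℕ) (hK : 2 ≤ K)
    (M : ℕ) (hM : 1 ≤ M) (z : Fin M → ℝ)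
    (hz : ∀ m, z m ∈ Set.Ioo (-A) A) (hzmono : StrictMono z)
    -- `f*` is the regression function `f*(x,s) = 𝔼[Y | X = x, S = s]`
    (fstar : (Fin d → ℝ) → 𝒮 → ℝ)
    (hfstarMeas : Measurable (Function.uncurry fstar))
    (hfstarBd : ∀ᵐ ω ∂μ, |fstar (X ω) (S ω)| ≤ A)
    (hreg : (fun ω => fstar (X ω) (S ω))
      =ᵐ[μ] μ[Y | MeasurableSpace.comap (fun ω => (X ω, S ω)) inferInstance])
    -- continuity assumption
    (hcont : ∀ s : 𝒮, Continuous fun t : ℝ =>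
      FairReg.condProb μ S s {ω | fstar (X ω) s ≤ t}) :
    ∃ (lam : 𝒮 → Fin M → ℝ) (ffair : (Fin d → ℝ) → 𝒮 → ℝ),
      -- `λ* ∈ Δ_M`
      (∀ m, ∑ s, lam s m = 0) ∧
      -- `ffair ∈ ℱ_K`
      Measurable (Function.uncurry ffair) ∧
      (∀ x s, ffair x s ∈ FairReg.grid A K) ∧
      -- `ffair` is `𝒵`-DP-fair
      (∀ s m, FairReg.condProb μ S s {ω | ffair (X ω) s ≤ z m}
        = (μ {ω | ffair (X ω) (S ω) ≤ z m}).toReal) ∧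
      -- `ffair` minimizes the risk over `𝒵`-DP-fair predictors in `ℱ_K`
      (∀ g : (Fin d → ℝ) → 𝒮 → ℝ, Measurable (Function.uncurry g) →
        (∀ x s, g x s ∈ FairReg.grid A K) →
        (∀ s m, FairReg.condProb μ S s {ω | g (X ω) s ≤ z m}
          = (μ {ω | g (X ω) (S ω) ≤ z m}).toReal) →
        FairReg.risk μ X S Y ffair ≤ FairReg.risk μ X S Y g) ∧
      -- pointwise form
      (∀ x s, ∀ y ∈ FairReg.grid A K,
        (μ (S ⁻¹' {s})).toReal * (ffair x s - fstar x s) ^ 2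
            + ∑ m, lam s m * FairReg.aInd z (ffair x s) m
          ≤ (μ (S ⁻¹' {s})).toReal * (y - fstar x s) ^ 2
            + ∑ m, lam s m * FairReg.aInd z y m) ∧
      -- dual optimality over `Δ_M`
      (∀ lam' : 𝒮 → Fin M → ℝ, (∀ m, ∑ s, lam' s m = 0) →
        (∑ s, ∫ ω, FairReg.gmax (FairReg.grid A K)
            (fun y => -(μ (S ⁻¹' {s})).toReal * (y - fstar (X ω) s) ^ 2
              - ∑ m, lam s m * FairReg.aInd z y m) ∂(μ[|S ⁻¹' {s}]))
        ≤ ∑ s, ∫ ω, FairReg.gmax (FairReg.grid A K)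
            (fun y => -(μ (S ⁻¹' {s})).toReal * (y - fstar (X ω) s) ^ 2
              - ∑ m, lam' s m * FairReg.aInd z y m) ∂(μ[|S ⁻¹' {s}])) := by
  exact optimal_ZDP_fair_discretized_predictor_general μ hX hS
    (.of_bound hY.aestronglyMeasurable A hYbd) hπ (FairReg.grid_nonempty A (by lia)) z
    hfstarMeas hreg hcont
end
end

section
/- Under the continuity assumption, the dual objective H(λ) := Σ_{s∈𝒮} 𝔼_s[ max_{y∈𝒴_K} ( −π_s (y − f*(X,s))² − ⟨λ_s, a(y) − ℓ⟩ ) ] is differentiable in λ with partial derivatives ∂H/∂λ_{s,m} = ℓ_m − ℙ_s( f*_λ(X,s) ≤ z_m ), where f*_λ(x,s) ∈ argmin_{y∈𝒴_K} { π_s (y − f*(x,s))² + ⟨λ_s, a(y)⟩ }; consequently, at any global minimizer λ* of H, the predictor f*_{λ*} satisfies ℙ_s( f*_{λ*}(X,s) ≤ z_m ) = ℓ_m for all s ∈ 𝒮 and m ∈ {1,…,M}, i.e., f*_{λ*} is (ℓ,𝒵)-fair. -/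
open MeasureTheory ProbabilityTheory Filter Function

noncomputable section

/-!
The integrand of `H` is a maximum of finitely many functions that are affine in `λ`. Two of them can
agree at a given `λ` only if `f*(X,s)` takes one specific value, and a continuous distribution has
no atoms, so almost surely the maximizer is unique. There the maximum coincides near `λ` with a
single affine function, namely the one selected by `f*_λ`. Since the maximum is Lipschitz in `λ`
uniformly in `ω`, one may differentiate under the expectation; the partial derivatives are expected
values of `ℓ_m - a_m(f*_λ)`, and they vanish at a minimizer.
-/

namespace FairReg

open scoped Topology

lemma gmax_eq_sup' {t : Finset ℝ} (ht : t.Nonempty) (g : ℝ → ℝ) : gmax t g = t.sup' ht g :=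
  (Finset.sup'_eq_csSup_image t ht g).symm

section FiniteMaximum

variable {κ E : Type*} {t : Finset κ}

lemma lipschitzWith_sup' [PseudoMetricSpace E] (ht : t.Nonempty) {F : κ → E → ℝ} {C : NNReal}
    (hF : ∀ i ∈ t, LipschitzWith C (F i)) :
    LipschitzWith C fun v => t.sup' ht (F · v) :=
  LipschitzWith.of_le_add_mul C fun v w => Finset.sup'_le ht _ fun i hi =>
    ((hF i hi).le_add_mul v w).trans <| by
      gcongr
      exact Finset.le_sup' (F · w) hi

/-- A case of Danskin's theorem. -/
lemma hasFDerivAt_sup'_of_isMaxOn_of_injOn [NormedAddCommGroup E] [NormedSpace ℝ E]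
    (ht : t.Nonempty) {F : κ → E → ℝ} {F' : E →L[ℝ] ℝ} {v : E} {i : κ} (hi : i ∈ t)
    (hF : HasFDerivAt (F i) F' v) (hcont : ∀ j ∈ t, ContinuousAt (F j) v)
    (hmax : IsMaxOn (F · v) t i) (hinj : Set.InjOn (F · v) t) :
    HasFDerivAt (fun w => t.sup' ht (F · w)) F' v := by
  have hmax_nhds : ∀ᶠ w in 𝓝 v, ∀ j ∈ t, F j w ≤ F i w := by
    refine (eventually_all_finset t).2 fun j hj => ?_
    obtain rfl | hji := eq_or_ne j i
    · exact .of_forall fun _ => le_rfl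
    · have hlt : F j v < F i v := (hmax hj).lt_of_ne (hinj.ne hj hi hji)
      exact ((hcont j hj).eventually_lt hF.continuousAt hlt).mono fun _ => le_of_lt
  refine hF.congr_of_eventuallyEq (hmax_nhds.mono fun w hw => ?_)
  exact le_antisymm (Finset.sup'_le ht _ hw) (Finset.le_sup' (F · w) hi)

end FiniteMaximum

section ParametricMaximum

variable {Ω κ E : Type*} [MeasurableSpace Ω] {ν : Measure Ω} {t : Finset κ} {sel : Ω → κ}

lemma integrable_sup' (ht : t.Nonempty) {F : κ → Ω → ℝ} (hF : ∀ i ∈ t, Integrable (F i) ν) :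
    Integrable (fun ω => t.sup' ht (F · ω)) ν := by
  have h : Integrable (t.sup' ht F) ν :=
    Finset.sup'_induction (p := fun f => Integrable f ν) ht F (fun _ hf _ hg => hf.sup hg) hF
  exact h.congr (.of_forall fun ω => Finset.sup'_apply ht F ω)

/-- The selection `sel` itself is not assumed measurable: where the maximizer is unique, `sel ω = i`
is the measurable condition that `F i ω` dominates all `F j ω`. -/
lemma aestronglyMeasurable_comp_of_isMaxOn_of_injOn {β : Type*} [TopologicalSpace β]
    [AddCommMonoid β] [ContinuousAdd β] {F : κ → Ω → ℝ} (hF : ∀ i ∈ t, AEMeasurable (F i) ν)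
    (hmem : ∀ ω, sel ω ∈ t) (hmax : ∀ ω, IsMaxOn (F · ω) t (sel ω))
    (hinj : ∀ᵐ ω ∂ν, Set.InjOn (F · ω) t) (φ : κ → β) :
    AEStronglyMeasurable (fun ω => φ (sel ω)) ν := by
  let D : κ → Set Ω := fun i => ⋂ j ∈ t, {ω | F j ω ≤ F i ω}
  have hD : ∀ i ∈ t, NullMeasurableSet (D i) ν := fun i hi =>
    .biInter t.countable_toSet fun j hj => nullMeasurableSet_le (hF j hj) (hF i hi)
  have hsum : AEStronglyMeasurable (fun ω => ∑ i ∈ t, (D i).indicator (fun _ => φ i) ω) ν :=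
    Finset.aestronglyMeasurable_fun_sum t fun i hi =>
      aestronglyMeasurable_const.indicator₀ (hD i hi)
  refine hsum.congr (hinj.mono fun ω hω => ?_)
  have hmem_D : ∀ i ∈ t, ω ∈ D i ↔ i = sel ω := fun i hi => by
    simp only [D, Set.mem_iInter, Set.mem_ofPred_eq]
    exact ⟨fun h => hω hi (hmem ω) ((hmax ω hi).antisymm (h _ (hmem ω))), fun h => h ▸ hmax ω⟩
  calc ∑ i ∈ t, (D i).indicator (fun _ => φ i) ω
      = (D (sel ω)).indicator (fun _ => φ (sel ω)) ω :=
        Finset.sum_eq_single_of_mem _ (hmem ω) fun i hi hne =>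
          Set.indicator_of_notMem (mt (hmem_D i hi).1 hne) _
    _ = φ (sel ω) := Set.indicator_of_mem ((hmem_D _ (hmem ω)).2 rfl) _

lemma hasFDerivAt_integral_sup'_affine [IsFiniteMeasure ν] [NormedAddCommGroup E]
    [NormedSpace ℝ E] (ht : t.Nonempty) {q : κ → Ω → ℝ} (hq : ∀ i ∈ t, Integrable (q i) ν)
    (L : κ → E →L[ℝ] ℝ) {v : E} (hmem : ∀ ω, sel ω ∈ t)
    (hmax : ∀ ω, IsMaxOn (fun i => q i ω + L i v) t (sel ω))
    (hinj : ∀ᵐ ω ∂ν, Set.InjOn (fun i => q i ω + L i v) t) :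
    Integrable (fun ω => L (sel ω)) ν ∧
      HasFDerivAt (fun w => ∫ ω, t.sup' ht (fun i => q i ω + L i w) ∂ν)
        (∫ ω, L (sel ω) ∂ν) v := by
  have hint : ∀ w, ∀ i ∈ t, Integrable (fun ω => q i ω + L i w) ν := fun w i hi =>
    (hq i hi).add (integrable_const _)
  have hlip : ∀ ω, ∀ i ∈ t, LipschitzWith (t.sup fun j => ‖L j‖₊) fun w => q i ω + L i w :=
    fun ω i hi => by
      simpa using (LipschitzWith.const (q i ω)).add
        ((L i).lipschitz.weaken (Finset.le_sup (f := fun j => ‖L j‖₊) hi))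
  refine hasFDerivAt_integral_of_dominated_loc_of_lip
    (bound := fun _ => ((t.sup fun j => ‖L j‖₊ : NNReal) : ℝ)) univ_mem
    (.of_forall fun w => (integrable_sup' ht (hint w)).aestronglyMeasurable)
    (integrable_sup' ht (hint v))
    (aestronglyMeasurable_comp_of_isMaxOn_of_injOn (fun i hi => (hint v i hi).aemeasurable)
      hmem hmax hinj L)
    (.of_forall fun ω => ?_) (integrable_const _) (hinj.mono fun ω hω => ?_)
  · simpa using lipschitzWith_sup' ht (hlip ω)
  · exact hasFDerivAt_sup'_of_isMaxOn_of_injOn ht (hmem ω) ((L _).hasFDerivAt.const_add _)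
      (fun i hi => (hlip ω i hi).continuous.continuousAt) (hmax ω) hω

end ParametricMaximum

section Law

variable {Ω 𝒮 : Type*} [MeasurableSpace Ω]

lemma nullSingletonClass_map_of_continuous_cdf {ν : Measure Ω} [IsProbabilityMeasure ν] {g : Ω → ℝ}
    (hg : AEMeasurable g ν) (hcont : Continuous fun c => ν.real {ω | g ω ≤ c}) :
    NullSingletonClass (ν.map g) := by
  have : IsProbabilityMeasure (ν.map g) := Measure.isProbabilityMeasure_map hg
  have hcdf : ⇑(cdf (ν.map g)) = fun c => ν.real {ω | g ω ≤ c} := funext fun c => by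
    rw [cdf_eq_real, map_measureReal_apply_of_aemeasurable hg measurableSet_Iic]
    rfl
  refine ⟨fun c => ?_⟩
  have hleft : leftLim (cdf (ν.map g)) c = cdf (ν.map g) c :=
    leftLim_eq_of_tendsto (hcdf ▸ hcont.continuousWithinAt)
  rw [← measure_cdf (ν.map g), StieltjesFunction.measure_singleton, hleft, sub_self,
    ENNReal.ofReal_zero]

lemma ae_injOn_quadratic_add {ρ : Measure ℝ} [NullSingletonClass ρ] {t : Set ℝ}
    (ht : t.Countable) {p : ℝ} (hp : p ≠ 0) (r : ℝ → ℝ) :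
    ∀ᵐ c ∂ρ, t.InjOn fun y => p * (y - c) ^ 2 + r y := by
  have hne : ∀ x y : ℝ, ∀ᵐ c ∂ρ, p * (x - c) ^ 2 + r x = p * (y - c) ^ 2 + r y → x = y := by
    intro x y
    by_cases hxy : x = y
    · exact .of_forall fun _ _ => hxy
    -- `c ^ 2` cancels, leaving a linear equation in `c` of slope `2 * p * (y - x)`
    have htie : {c | p * (x - c) ^ 2 + r x = p * (y - c) ^ 2 + r y}.Subsingleton := by
      intro c hc c' hc'
      have h : 2 * p * (x - y) * (c - c') = 0 := by
        rw [Set.mem_ofPred_eq] at hc hc'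
        linear_combination hc' - hc
      simpa [hp, sub_ne_zero.2 hxy, sub_eq_zero] using h
    filter_upwards [measure_eq_zero_iff_ae_notMem.1 (htie.measure_zero ρ)] with c hc h
    exact absurd h hc
  filter_upwards [(ae_ball_iff ht).2 fun x _ => (ae_ball_iff ht).2 fun y _ => hne x y]
    with c hc x hx y hy using hc x hx y hy

lemma ae_cond_fiber {μ : Measure Ω} {S : Ω → 𝒮} {s : 𝒮} (hs : MeasurableSet (S ⁻¹' {s}))
    {P : Ω → 𝒮 → Prop} (h : ∀ᵐ ω ∂μ, P ω (S ω)) : ∀ᵐ ω ∂μ[|S ⁻¹' {s}], P ω s := by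
  filter_upwards [ae_cond_mem hs, cond_absolutelyContinuous.ae_le h] with ω (hω : S ω = s) hP
  exact hω ▸ hP

end Law

lemma integral_aInd_comp {Ω : Type*} [MeasurableSpace Ω] {ν : Measure Ω} {M : ℕ} {z : Fin M → ℝ}
    {m : Fin M} {f : Ω → ℝ} (hf : AEStronglyMeasurable (fun ω => aInd z (f ω) m) ν) :
    ∫ ω, aInd z (f ω) m ∂ν = ν.real {ω | f ω ≤ z m} := by
  have hnull : NullMeasurableSet {ω | f ω ≤ z m} ν := by
    convert hf.aemeasurable.nullMeasurable (measurableSet_singleton 1) using 1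
    ext ω
    simp [aInd]
  calc ∫ ω, aInd z (f ω) m ∂ν = ∫ ω, {ω | f ω ≤ z m}.indicator (fun _ => (1 : ℝ)) ω ∂ν := by
        simp only [aInd, Set.indicator_apply, Set.mem_ofPred_eq]
    _ = ν.real {ω | f ω ≤ z m} := by simp [integral_indicator₀ hnull]

section Dual

variable {Ω 𝒮 : Type*} {M : ℕ}

/-- The linear functional `λ ↦ ⟨λ_s, a(y) - ℓ⟩`. -/
def constraintPairing (z ℓ : Fin M → ℝ) (s : 𝒮) (y : ℝ) : (𝒮 × Fin M → ℝ) →L[ℝ] ℝ :=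
  ∑ m, (aInd z y m - ℓ m) • ContinuousLinearMap.proj (s, m)

lemma constraintPairing_apply (z ℓ : Fin M → ℝ) (s : 𝒮) (y : ℝ) (lam : 𝒮 × Fin M → ℝ) :
    constraintPairing z ℓ s y lam = ∑ m, lam (s, m) * (aInd z y m - ℓ m) := by
  simp [constraintPairing, mul_comm]

lemma constraintPairing_single [DecidableEq 𝒮] (z ℓ : Fin M → ℝ) (s s' : 𝒮) (m : Fin M) (y : ℝ) :
    constraintPairing z ℓ s' y (Pi.single (s, m) 1) = if s' = s then aInd z y m - ℓ m else 0 := by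
  by_cases h : s' = s <;> simp [constraintPairing_apply, Pi.single_apply, h]

/-- `sel s` selects, for every `ω`, a point of the argmin over `t` of
`y ↦ π_s (y - f_s(ω))² + ⟨λ_s, a(y)⟩`. -/
def IsArgminSelection (π : 𝒮 → ℝ) (f : 𝒮 → Ω → ℝ) (t : Finset ℝ) (z : Fin M → ℝ)
    (lam : 𝒮 × Fin M → ℝ) (sel : 𝒮 → Ω → ℝ) : Prop :=
  ∀ s ω, sel s ω ∈ t ∧ ∀ y ∈ t,
    π s * (sel s ω - f s ω) ^ 2 + ∑ m, lam (s, m) * aInd z (sel s ω) m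
      ≤ π s * (y - f s ω) ^ 2 + ∑ m, lam (s, m) * aInd z y m

/-- The dual objective `H`, for candidate predictions in `t`, group weights `π`, and an arbitrary
family `ν` of group laws in place of the conditional probabilities `ℙ_s`; the function `f s` stands
for `f*(X,s)`. -/
def dualObjective [Fintype 𝒮] [MeasurableSpace Ω] (π : 𝒮 → ℝ) (ν : 𝒮 → Measure Ω)
    (f : 𝒮 → Ω → ℝ) (t : Finset ℝ) (z ℓ : Fin M → ℝ) (lam : 𝒮 × Fin M → ℝ) : ℝ :=
  ∑ s, ∫ ω, gmax t (fun y => -π s * (y - f s ω) ^ 2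
    - ∑ m, lam (s, m) * (aInd z y m - ℓ m)) ∂(ν s)

variable {π : 𝒮 → ℝ} {f : 𝒮 → Ω → ℝ} {t : Finset ℝ} {z : Fin M → ℝ} {lam : 𝒮 × Fin M → ℝ}
  {sel : 𝒮 → Ω → ℝ}

lemma IsArgminSelection.isMaxOn (h : IsArgminSelection π f t z lam sel) (ℓ : Fin M → ℝ) (s : 𝒮)
    (ω : Ω) :
    IsMaxOn (fun y => -π s * (y - f s ω) ^ 2 + (-constraintPairing z ℓ s y) lam) t (sel s ω) := by
  intro y hy
  have hle := (h s ω).2 y hy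
  simp only [Set.mem_ofPred_eq, neg_apply, constraintPairing_apply, mul_sub,
    Finset.sum_sub_distrib]
  linarith

variable [MeasurableSpace Ω] {ρ : Measure Ω} {s : 𝒮} [NullSingletonClass (ρ.map (f s))]

lemma ae_injOn_score_s11 (hπ : π s ≠ 0) (hf : AEMeasurable (f s) ρ) (t : Finset ℝ)
    (z ℓ : Fin M → ℝ) (lam : 𝒮 × Fin M → ℝ) : ∀ᵐ ω ∂ρ, Set.InjOn
      (fun y => -π s * (y - f s ω) ^ 2 + (-constraintPairing z ℓ s y) lam) t :=
  ae_of_ae_map hf (ae_injOn_quadratic_add t.countable_toSet (neg_ne_zero.2 hπ) _)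

lemma IsArgminSelection.aestronglyMeasurable_aInd (h : IsArgminSelection π f t z lam sel)
    (hπ : π s ≠ 0) (hf : AEMeasurable (f s) ρ) (m : Fin M) :
    AEStronglyMeasurable (fun ω => aInd z (sel s ω) m) ρ :=
  aestronglyMeasurable_comp_of_isMaxOn_of_injOn
    (fun y _ => (((hf.const_sub y).pow_const 2).const_mul (-π s)).add_const _)
    (fun ω => (h s ω).1) (h.isMaxOn 0 s) (ae_injOn_score_s11 hπ hf t z 0 lam) fun y => aInd z y m

variable [Fintype 𝒮]

lemma IsArgminSelection.hasFDerivAt_integral_gmax [IsProbabilityMeasure ρ]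
    (h : IsArgminSelection π f t z lam sel) (hπ : π s ≠ 0) (hf : MemLp (f s) 2 ρ)
    (ℓ : Fin M → ℝ) :
    Integrable (fun ω => -constraintPairing z ℓ s (sel s ω)) ρ ∧
      HasFDerivAt (fun lam : 𝒮 × Fin M → ℝ => ∫ ω, gmax t (fun y => -π s * (y - f s ω) ^ 2
          - ∑ m, lam (s, m) * (aInd z y m - ℓ m)) ∂ρ)
        (∫ ω, -constraintPairing z ℓ s (sel s ω) ∂ρ) lam := by
  obtain ⟨ω₀⟩ := nonempty_of_isProbabilityMeasure ρ
  have ht : t.Nonempty := ⟨_, (h s ω₀).1⟩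
  have hsq : ∀ y ∈ t, Integrable (fun ω => -π s * (y - f s ω) ^ 2) ρ := fun y _ =>
    (((memLp_const y).sub hf).integrable_sq).const_mul (-π s)
  simpa only [gmax_eq_sup' ht, neg_apply, constraintPairing_apply, ← sub_eq_add_neg] using
    hasFDerivAt_integral_sup'_affine ht hsq (fun y => -constraintPairing z ℓ s y)
      (fun ω => (h s ω).1) (h.isMaxOn ℓ s) (ae_injOn_score_s11 hπ hf.1.aemeasurable t z ℓ lam)

lemma IsArgminSelection.integral_constraintPairing_single [IsProbabilityMeasure ρ] [DecidableEq 𝒮]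
    (h : IsArgminSelection π f t z lam sel) (hπ : π s ≠ 0) (hf : MemLp (f s) 2 ρ)
    (ℓ : Fin M → ℝ) (s' : 𝒮) (m : Fin M) :
    (∫ ω, -constraintPairing z ℓ s (sel s ω) ∂ρ) (Pi.single (s', m) 1) =
      if s = s' then ℓ m - ρ.real {ω | sel s ω ≤ z m} else 0 := by
  have hmeas := h.aestronglyMeasurable_aInd hπ hf.1.aemeasurable m
  have hint : Integrable (fun ω => aInd z (sel s ω) m) ρ :=
    .of_bound hmeas 1 <| .of_forall fun ω => by unfold aInd; split_ifs <;> simp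
  rw [ContinuousLinearMap.integral_apply (h.hasFDerivAt_integral_gmax hπ hf ℓ).1]
  simp only [neg_apply, constraintPairing_single]
  split_ifs
  · simp only [neg_sub]
    rw [integral_sub (integrable_const _) hint, integral_aInd_comp hmeas]
    simp
  · simp

variable {ν : 𝒮 → Measure Ω} [∀ s, IsProbabilityMeasure (ν s)]
  [∀ s, NullSingletonClass ((ν s).map (f s))]

lemma IsArgminSelection.hasFDerivAt_dualObjective (h : IsArgminSelection π f t z lam sel)
    (hπ : ∀ s, π s ≠ 0) (hf : ∀ s, MemLp (f s) 2 (ν s)) (ℓ : Fin M → ℝ) :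
    HasFDerivAt (dualObjective π ν f t z ℓ)
      (∑ s, ∫ ω, -constraintPairing z ℓ s (sel s ω) ∂(ν s)) lam :=
  .fun_sum fun s _ => (h.hasFDerivAt_integral_gmax (hπ s) (hf s) ℓ).2

lemma IsArgminSelection.hasDerivAt_dualObjective_update [DecidableEq 𝒮]
    (h : IsArgminSelection π f t z lam sel) (hπ : ∀ s, π s ≠ 0)
    (hf : ∀ s, MemLp (f s) 2 (ν s)) (ℓ : Fin M → ℝ) (s : 𝒮) (m : Fin M) :
    HasDerivAt (fun x : ℝ => dualObjective π ν f t z ℓ (update lam (s, m) x))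
      (ℓ m - (ν s).real {ω | sel s ω ≤ z m}) (lam (s, m)) := by
  have hchain := (h.hasFDerivAt_dualObjective hπ hf ℓ).comp_hasDerivAt_of_eq (lam (s, m))
    (hasDerivAt_update lam (s, m) (lam (s, m))) (update_eq_self _ _).symm
  refine hchain.congr_deriv ?_
  simp [sum_apply, h.integral_constraintPairing_single (hπ _) (hf _)]

end Dual

lemma eq_zero_of_hasDerivAt_update_of_forall_le {ι : Type*} [DecidableEq ι] {H : (ι → ℝ) → ℝ}
    {v : ι → ℝ} (hmin : ∀ w, H v ≤ H w) {i : ι} {H' : ℝ}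
    (hH : HasDerivAt (fun x => H (update v i x)) H' (v i)) : H' = 0 :=
  IsLocalMin.hasDerivAt_eq_zero (.of_forall fun x => by simpa using hmin (update v i x)) hH

end FairReg

theorem dual_objective_differentiable_first_order_general
    {Ω 𝒮 : Type*} [MeasurableSpace Ω] [Fintype 𝒮] [DecidableEq 𝒮] {M : ℕ}
    (ν : 𝒮 → Measure Ω) [∀ s, IsProbabilityMeasure (ν s)]
    (π : 𝒮 → ℝ) (hπ : ∀ s, π s ≠ 0) (ℓ z : Fin M → ℝ) (𝒴 : Finset ℝ)
    (f : 𝒮 → Ω → ℝ) (hf : ∀ s, MemLp (f s) 2 (ν s))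
    (hcont : ∀ s, Continuous fun c => (ν s).real {ω | f s ω ≤ c})
    (flam : (𝒮 × Fin M → ℝ) → 𝒮 → Ω → ℝ)
    (hflam : ∀ lam, FairReg.IsArgminSelection π f 𝒴 z lam (flam lam)) :
    Differentiable ℝ (FairReg.dualObjective π ν f 𝒴 z ℓ) ∧
    (∀ (lam : 𝒮 × Fin M → ℝ) (s : 𝒮) (m : Fin M),
      HasDerivAt (fun x : ℝ => FairReg.dualObjective π ν f 𝒴 z ℓ (update lam (s, m) x))
        (ℓ m - (ν s).real {ω | flam lam s ω ≤ z m}) (lam (s, m))) ∧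
    (∀ lamstar : 𝒮 × Fin M → ℝ,
      (∀ lam, FairReg.dualObjective π ν f 𝒴 z ℓ lamstar ≤ FairReg.dualObjective π ν f 𝒴 z ℓ lam) →
      ∀ s m, (ν s).real {ω | flam lamstar s ω ≤ z m} = ℓ m) := by
  have (s : 𝒮) : NullSingletonClass ((ν s).map (f s)) :=
    FairReg.nullSingletonClass_map_of_continuous_cdf (hf s).1.aemeasurable (hcont s)
  have hderiv := fun lam => (hflam lam).hasDerivAt_dualObjective_update (ν := ν) hπ hf ℓ
  refine ⟨fun lam => ((hflam lam).hasFDerivAt_dualObjective hπ hf ℓ).differentiableAt, hderiv,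
    fun lamstar hmin s m => ?_⟩
  have hzero := FairReg.eq_zero_of_hasDerivAt_update_of_forall_le hmin (hderiv lamstar s m)
  exact (sub_eq_zero.1 hzero).symm

/-- Under the continuity assumption the dual objective `H` is differentiable
with partial derivatives `∂H/∂λ_{s,m} = ℓ_m - ℙ_s(f*_λ(X,s) ≤ z_m)`; consequently, at any
global minimizer `λ*` of `H` the predictor `f*_{λ*}` is `(ℓ,𝒵)`-fair. -/
theorem dual_objective_differentiable_first_order
    {Ω 𝒮 : Type} [MeasurableSpace Ω] [Fintype 𝒮] [Nonempty 𝒮] [DecidableEq 𝒮]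
    [MeasurableSpace 𝒮] [MeasurableSingletonClass 𝒮]
    (μ : Measure Ω) [IsProbabilityMeasure μ]
    {d : ℕ} (X : Ω → Fin d → ℝ) (S : Ω → 𝒮)
    (hX : Measurable X) (hS : Measurable S)
    (A : ℝ) (hA : 0 < A)
    (hπ : ∀ s : 𝒮, 0 < (μ (S ⁻¹' {s})).toReal)
    (K : ℕ) (hK : 2 ≤ K)
    (M : ℕ) (hM : 1 ≤ M) (ℓ : Fin M → ℝ) (z : Fin M → ℝ)
    (hℓ : ∀ m, ℓ m ∈ Set.Ioo (0 : ℝ) 1) (hℓmono : StrictMono ℓ)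
    (hz : ∀ m, z m ∈ Set.Ioo (-A) A) (hzmono : StrictMono z)
    (fstar : (Fin d → ℝ) → 𝒮 → ℝ)
    (hfstarMeas : Measurable (Function.uncurry fstar))
    (hfstarBd : ∀ᵐ ω ∂μ, |fstar (X ω) (S ω)| ≤ A)
    -- continuity assumption
    (hcont : ∀ s : 𝒮, Continuous fun t : ℝ =>
      FairReg.condProb μ S s {ω | fstar (X ω) s ≤ t})
    -- the dual objective `H`
    (H : (𝒮 × Fin M → ℝ) → ℝ)
    (hH : ∀ lam, H lam = ∑ s, ∫ ω, FairReg.gmax (FairReg.grid A K)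
        (fun y => -(μ (S ⁻¹' {s})).toReal * (y - fstar (X ω) s) ^ 2
          - ∑ m, lam (s, m) * (FairReg.aInd z y m - ℓ m)) ∂(μ[|S ⁻¹' {s}]))
    -- `f*_λ` is a pointwise argmin selection
    (flam : (𝒮 × Fin M → ℝ) → (Fin d → ℝ) → 𝒮 → ℝ)
    (hflam : ∀ lam x s,
      flam lam x s ∈ FairReg.grid A K ∧
      ∀ y ∈ FairReg.grid A K,
        (μ (S ⁻¹' {s})).toReal * (flam lam x s - fstar x s) ^ 2
            + ∑ m, lam (s, m) * FairReg.aInd z (flam lam x s) m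
          ≤ (μ (S ⁻¹' {s})).toReal * (y - fstar x s) ^ 2
            + ∑ m, lam (s, m) * FairReg.aInd z y m) :
    -- `H` is differentiable …
    Differentiable ℝ H ∧
    -- … with partial derivatives `∂H/∂λ_{s,m} = ℓ_m - ℙ_s(f*_λ(X,s) ≤ z_m)` …
    (∀ (lam : 𝒮 × Fin M → ℝ) (s : 𝒮) (m : Fin M),
      HasDerivAt (fun t : ℝ => H (Function.update lam (s, m) t))
        (ℓ m - FairReg.condProb μ S s {ω | flam lam (X ω) s ≤ z m})
        (lam (s, m))) ∧
    -- … hence at any global minimizer `λ*` of `H`, `f*_{λ*}` is `(ℓ,𝒵)`-fair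
    (∀ lamstar : 𝒮 × Fin M → ℝ, (∀ lam, H lamstar ≤ H lam) →
      ∀ s m, FairReg.condProb μ S s {ω | flam lamstar (X ω) s ≤ z m} = ℓ m) := by
  have (s : 𝒮) : IsProbabilityMeasure (μ[|S ⁻¹' {s}]) :=
    cond_isProbabilityMeasure (ENNReal.toReal_pos_iff.1 (hπ s)).1.ne'
  have hfL2 (s : 𝒮) : MemLp (fun ω => fstar (X ω) s) 2 (μ[|S ⁻¹' {s}]) :=
    .of_bound (hfstarMeas.comp (hX.prodMk measurable_const)).aestronglyMeasurable A
      (FairReg.ae_cond_fiber (P := fun ω s => |fstar (X ω) s| ≤ A)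
        (hS (measurableSet_singleton s)) hfstarBd)
  obtain rfl : H = FairReg.dualObjective (fun s => (μ (S ⁻¹' {s})).toReal)
      (fun s => μ[|S ⁻¹' {s}]) (fun s ω => fstar (X ω) s) (FairReg.grid A K) z ℓ := funext hH
  exact dual_objective_differentiable_first_order_general _ _ (fun s => (hπ s).ne') ℓ z _ _ hfL2
    hcont (fun lam s ω => flam lam (X ω) s) fun lam s ω => hflam lam (X ω) s
end
end
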